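/- Let G be a full DAG with a fixed ample framing inducing a {1,2}-weighting ω on its edges. Then there is a bijection between the set of non-exceptional routes of G and the set T(Λ(G)) consisting of the isomorphism classes of indecomposable Λ(G)-modules together with the shifted projectives P_i[1] for each inner vertex i, where Λ(G) is the gentle algebra associated to G. -/

import Mathlib

/-- A finite directed acyclic multigraph. -/
structure DAG where
  V : Type
  E : Type
  [fintypeV : Fintype V]
  [fintypeE : Fintype E]
  [decEqV : DecidableEq V]
  [decEqE : DecidableEq E]
  src : E → V
  tgt : E → V
  acyclic : ∀ v : V,
    ¬ Relation.TransGen (fun a b : V => ∃ e : E, src e = a ∧ tgt e = b) v v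

attribute [instance] DAG.fintypeV DAG.fintypeE DAG.decEqV DAG.decEqE

namespace DAG

variable (G : DAG)

/-- A vertex with no incoming edges. -/
def IsSource (v : G.V) : Prop := ∀ e : G.E, G.tgt e ≠ v

/-- A vertex with no outgoing edges. -/
def IsSink (v : G.V) : Prop := ∀ e : G.E, G.src e ≠ v

/-- An inner vertex is neither a source nor a sink. -/
def IsInner (v : G.V) : Prop := ¬ G.IsSource v ∧ ¬ G.IsSink v

instance : DecidablePred G.IsSource := fun v =>
  decidable_of_iff (∀ e : G.E, G.tgt e ≠ v) Iff.rfl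

instance : DecidablePred G.IsSink := fun v =>
  decidable_of_iff (∀ e : G.E, G.src e ≠ v) Iff.rfl

instance : DecidablePred G.IsInner := fun v =>
  decidable_of_iff (¬ G.IsSource v ∧ ¬ G.IsSink v) Iff.rfl

/-- In-degree: the number of edges with target `v`. -/
def indeg (v : G.V) : ℕ := Fintype.card {e : G.E // G.tgt e = v}

/-- Out-degree: the number of edges with source `v`. -/
def outdeg (v : G.V) : ℕ := Fintype.card {e : G.E // G.src e = v}

/-- A DAG is full if every inner vertex has in-degree 2 and out-degree 2. -/
def Full : Prop := ∀ v : G.V, G.IsInner v → G.indeg v = 2 ∧ G.outdeg v = 2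

/-- A route: a maximal directed path, i.e. a nonempty list of consecutive edges
starting at a source and ending at a sink. -/
structure Route where
  edges : List G.E
  ne : edges ≠ []
  chain : edges.Chain' (fun e f => G.tgt e = G.src f)
  source_start : G.IsSource (G.src (edges.head ne))
  sink_end : G.IsSink (G.tgt (edges.getLast ne))

/-- A route visits a vertex if the vertex is an endpoint of one of its edges. -/
def Route.visits (R : G.Route) (v : G.V) : Prop :=
  ∃ e ∈ R.edges, G.src e = v ∨ G.tgt e = v

/-- A framing: a linear order on the incoming edges and a linear order on the
outgoing edges of every inner vertex. -/
structure Framing where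
  inlt : G.E → G.E → Prop
  outlt : G.E → G.E → Prop
  inlt_tgt : ∀ {e f}, inlt e f → G.tgt e = G.tgt f
  inlt_inner : ∀ {e f}, inlt e f → G.IsInner (G.tgt e)
  inlt_irrefl : ∀ e, ¬ inlt e e
  inlt_trans : ∀ {e f g}, inlt e f → inlt f g → inlt e g
  inlt_total : ∀ e f, G.tgt e = G.tgt f → G.IsInner (G.tgt e) → e ≠ f →
    inlt e f ∨ inlt f e
  outlt_src : ∀ {e f}, outlt e f → G.src e = G.src f
  outlt_inner : ∀ {e f}, outlt e f → G.IsInner (G.src e)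
  outlt_irrefl : ∀ e, ¬ outlt e e
  outlt_trans : ∀ {e f g}, outlt e f → outlt f g → outlt e g
  outlt_total : ∀ e f, G.src e = G.src f → G.IsInner (G.src e) → e ≠ f →
    outlt e f ∨ outlt f e

/-- The induced order on paths ending at a common vertex: compare the two edges
just before the longest common suffix. -/
def inPathLt (F : G.Framing) (P Q : List G.E) : Prop :=
  ∃ (p q s : List G.E) (e f : G.E), e ≠ f ∧
    P = p ++ e :: s ∧ Q = q ++ f :: s ∧ F.inlt e f

/-- The induced order on paths starting at a common vertex: compare the two edges
just after the longest common prefix. -/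
def outPathLt (F : G.Framing) (P Q : List G.E) : Prop :=
  ∃ (s p q : List G.E) (e f : G.E), e ≠ f ∧
    P = s ++ e :: p ∧ Q = s ++ f :: q ∧ F.outlt e f

/-- Routes `P` and `Q` are in conflict (with `P` playing the first role) if they
pass through a common inner vertex `v` with `Pv ≺ Qv` in the in-order and
`vQ ≺ vP` in the out-order. -/
def Conflict (F : G.Framing) (P Q : G.Route) : Prop :=
  ∃ (v : G.V) (a b c d : List G.E) (ea ec : G.E),
    P.edges = a ++ [ea] ++ b ∧ Q.edges = c ++ [ec] ++ d ∧
    G.tgt ea = v ∧ G.tgt ec = v ∧ b ≠ [] ∧ d ≠ [] ∧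
    G.inPathLt F (a ++ [ea]) (c ++ [ec]) ∧ G.outPathLt F d b

/-- Two routes are coherent if they are not in conflict at any common inner
vertex (in either order). -/
def CoherentPair (F : G.Framing) (P Q : G.Route) : Prop :=
  ¬ G.Conflict F P Q ∧ ¬ G.Conflict F Q P

/-- A route is exceptional if it is coherent with every route. -/
def Exceptional (F : G.Framing) (R : G.Route) : Prop :=
  ∀ S : G.Route, G.CoherentPair F R S

/-- An edge is idle if it is the unique incoming or the unique outgoing edge of
an inner vertex. -/
def Idle (e : G.E) : Prop :=
  (G.IsInner (G.tgt e) ∧ ∀ f : G.E, G.tgt f = G.tgt e → f = e) ∨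
  (G.IsInner (G.src e) ∧ ∀ f : G.E, G.src f = G.src e → f = e)

/-- A framing is ample if every non-idle edge lies on an exceptional route. -/
def Ample (F : G.Framing) : Prop :=
  ∀ e : G.E, ¬ G.Idle e → ∃ R : G.Route, G.Exceptional F R ∧ e ∈ R.edges

/-- `e` is smallest among the edges entering its target. -/
def MinIn (F : G.Framing) (e : G.E) : Prop :=
  ∀ f : G.E, G.tgt f = G.tgt e → f ≠ e → F.inlt e f

/-- `e` is largest among the edges entering its target. -/
def MaxIn (F : G.Framing) (e : G.E) : Prop :=
  ∀ f : G.E, G.tgt f = G.tgt e → f ≠ e → F.inlt f e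

/-- `e` is smallest among the edges leaving its source. -/
def MinOut (F : G.Framing) (e : G.E) : Prop :=
  ∀ f : G.E, G.src f = G.src e → f ≠ e → F.outlt e f

/-- `e` is largest among the edges leaving its source. -/
def MaxOut (F : G.Framing) (e : G.E) : Prop :=
  ∀ f : G.E, G.src f = G.src e → f ≠ e → F.outlt f e

/-- The characteristic vector of a route. -/
noncomputable def charVec (R : G.Route) : G.E → ℝ :=
  fun e => if e ∈ R.edges then 1 else 0

end DAG
namespace DAG

variable (G : DAG)

-- The `{1,2}`-weight of an edge induced by an ample framing: weight `1` if
-- the edge is minimal in the framing orders at its (inner) endpoints, and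
-- weight `2` otherwise.
open Classical in
noncomputable def weight (F : G.Framing) (e : G.E) : ℕ :=
  if (G.IsInner (G.tgt e) → G.MinIn F e) ∧ (G.IsInner (G.src e) → G.MinOut F e)
  then 1 else 2

/-- The vertices of the quiver `Q` of `Λ(G)`: the inner vertices of `G`. -/
def InnerV := {v : G.V // G.IsInner v}

/-- The source of the quiver arrow determined by an edge of `G` between inner
vertices: the edge itself if it has weight 1, the reversed edge otherwise. -/
noncomputable def arrowSrc (F : G.Framing) (e : G.E)
    (hs : G.IsInner (G.src e)) (ht : G.IsInner (G.tgt e)) : G.InnerV :=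
  if G.weight F e = 1 then ⟨G.src e, hs⟩ else ⟨G.tgt e, ht⟩

/-- The target of the quiver arrow determined by an edge of `G` between inner
vertices. -/
noncomputable def arrowTgt (F : G.Framing) (e : G.E)
    (hs : G.IsInner (G.src e)) (ht : G.IsInner (G.tgt e)) : G.InnerV :=
  if G.weight F e = 1 then ⟨G.tgt e, ht⟩ else ⟨G.src e, hs⟩

/-- A (finite dimensional) module over the gentle algebra `Λ(G) = KQ/I`,
presented as a representation of the quiver `Q` satisfying the relations:
the composite along any length-two path of `Q` whose two arrows come from
edges of different weights vanishes. -/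
structure Rep (F : G.Framing) (K : Type) [Field K] where
  space : G.InnerV → Type
  [acg : ∀ v, AddCommGroup (space v)]
  [mod : ∀ v, Module K (space v)]
  [fd : ∀ v, FiniteDimensional K (space v)]
  map : ∀ (e : G.E) (hs : G.IsInner (G.src e)) (ht : G.IsInner (G.tgt e)),
    space (G.arrowSrc F e hs ht) →ₗ[K] space (G.arrowTgt F e hs ht)
  rel : ∀ (e₁ e₂ : G.E) (hs₁ : G.IsInner (G.src e₁)) (ht₁ : G.IsInner (G.tgt e₁))
    (hs₂ : G.IsInner (G.src e₂)) (ht₂ : G.IsInner (G.tgt e₂))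
    (h : G.arrowTgt F e₁ hs₁ ht₁ = G.arrowSrc F e₂ hs₂ ht₂),
    G.weight F e₁ ≠ G.weight F e₂ →
    ∀ x, map e₂ hs₂ ht₂ (cast (congrArg space h) (map e₁ hs₁ ht₁ x)) = 0

attribute [instance] Rep.acg Rep.mod Rep.fd

variable {G} in
/-- A morphism of representations of the quiver with relations. -/
structure RepHom {F : G.Framing} {K : Type} [Field K] (M N : G.Rep F K) where
  app : ∀ v : G.InnerV, M.space v →ₗ[K] N.space v
  comm : ∀ (e : G.E) (hs : G.IsInner (G.src e)) (ht : G.IsInner (G.tgt e))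
    (x : M.space (G.arrowSrc F e hs ht)),
    app (G.arrowTgt F e hs ht) (M.map e hs ht x) =
      N.map e hs ht (app (G.arrowSrc F e hs ht) x)

variable {G} in
/-- Two representations are isomorphic if there is a morphism which is
bijective at every vertex. -/
def RepIso {F : G.Framing} {K : Type} [Field K] (M N : G.Rep F K) : Prop :=
  ∃ φ : RepHom M N, ∀ v : G.InnerV, Function.Bijective (φ.app v)

variable {G} in
/-- A representation is indecomposable iff it is nonzero and its only
idempotent endomorphisms are `0` and the identity. -/
def Indecomposable {F : G.Framing} {K : Type} [Field K] (M : G.Rep F K) : Prop :=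
  (∃ (v : G.InnerV) (x : M.space v), x ≠ 0) ∧
  ∀ φ : RepHom M M,
    (∀ (v : G.InnerV) (x : M.space v), φ.app v (φ.app v x) = φ.app v x) →
    (∀ (v : G.InnerV) (x : M.space v), φ.app v x = 0) ∨
    (∀ (v : G.InnerV) (x : M.space v), φ.app v x = x)

/-- The set `T(Λ(G))`: isomorphism classes of indecomposable `Λ(G)`-modules
together with one shifted projective `P_i[1]` for each vertex `i` of the
quiver. -/
def TLambda (F : G.Framing) (K : Type) [Field K] : Type 1 :=
  Quot (fun M N : {M : G.Rep F K // Indecomposable M} => RepIso M.1 N.1) ⊕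
    G.InnerV

end DAG

/-!
Since the framing is ample, a route is exceptional exactly when all its edges have the same
weight, and at every inner vertex each weight occurs on exactly one incoming and exactly one
outgoing edge. Given a non-exceptional route, compare its first edge of weight `2` with its last
edge of weight `1`. If the former comes first, the part of the route between them is a path of
inner vertices; otherwise the weights are `1, …, 1, 2, …, 2`, and the inner vertex `i` at which
they switch gives `P_i[1]`. Conversely a path of inner vertices determines its route: bound it by
an incoming edge of weight `2` and an outgoing edge of weight `1`, then follow weight `1`
backwards to a source and weight `2` forwards to a sink.

Every walk without relations in the quiver of `Λ(G)` is monotone in `G`, so the paths of inner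
vertices are its strings and, `G` being acyclic, there are no bands. A string module has only
scalar endomorphisms and is determined by its support. Conversely let `M` be indecomposable and
let `v` be a minimal vertex of its support. Starting from the subspaces `0 < M_v` and moving a
pair of subspaces `W' < W` along preimages or images of arrows, as long as it stays proper, traces
a path from `v` together with vectors and functionals which split off from `M` the string module
of that path.
-/

namespace DAG

section Paths

variable {V E : Type*} {s t : E → V} {p : E → Prop} {l l' : List E} {u v w w' : V} {e₀ : E}

/-- `IsPath s t u l w`: the edges in `l` form a directed path from `u` to `w` in the multigraph
whose edge `e` runs from `s e` to `t e`. Exchanging `s` and `t` reverses every edge, so backward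
paths need no separate treatment. -/
def IsPath (s t : E → V) : V → List E → V → Prop
  | u, [], w => u = w
  | u, e :: l, w => s e = u ∧ IsPath s t (t e) l w

theorem isPath_append : IsPath s t u (l ++ l') w ↔ ∃ v, IsPath s t u l v ∧ IsPath s t v l' w := by
  induction l generalizing u with
  | nil => simp [IsPath]
  | cons e l ih => simp [IsPath, ih, and_assoc]

theorem isPath_reverse : IsPath t s w l.reverse u ↔ IsPath s t u l w := by
  induction l generalizing u with
  | nil => exact eq_comm
  | cons e l ih => simp [IsPath, isPath_append, ih, and_comm]

theorem isPath_iff_isChain (hl : l ≠ []) : IsPath s t u l w ↔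
    l.IsChain (fun e f => t e = s f) ∧ s (l.head hl) = u ∧ t (l.getLast hl) = w := by
  induction l generalizing u with
  | nil => exact absurd rfl hl
  | cons e l ih =>
    cases l with
    | nil => simp [IsPath]
    | cons f l =>
      rw [IsPath, ih (List.cons_ne_nil f l), List.isChain_cons_cons,
        List.getLast_cons (List.cons_ne_nil f l)]
      simp only [List.head_cons, eq_comm (a := s f)]
      tauto

theorem IsPath.finish_unique (h : IsPath s t u l w) (h' : IsPath s t u l w') : w = w' := by
  induction l generalizing u with
  | nil => exact h.symm.trans h'
  | cons e l ih => exact ih h.2 h'.2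

theorem IsPath.cons_map_tgt_eq (h : IsPath s t u l w) : u :: l.map t = l.map s ++ [w] := by
  induction l generalizing u with
  | nil => simpa [IsPath] using h
  | cons e l ih => simp [h.1, ih h.2]

theorem IsPath.forall_mem_support {P : V → Prop} (h : IsPath s t u l w) (hu : P u)
    (hstep : ∀ e ∈ l, P (s e) → P (t e)) : ∀ v ∈ u :: l.map t, P v := by
  induction l generalizing u with
  | nil => simpa using hu
  | cons e l ih =>
    have htail := ih h.2 (hstep e List.mem_cons_self (h.1 ▸ hu))
      fun f hf => hstep f (List.mem_cons_of_mem e hf)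
    exact List.forall_mem_cons.2 ⟨hu, htail⟩

theorem IsPath.tgt_mem_support (he : e₀ ∈ l) : t e₀ ∈ u :: l.map t :=
  List.mem_cons_of_mem u (List.mem_map_of_mem he)

theorem IsPath.src_mem_support (h : IsPath s t u l w) (he : e₀ ∈ l) : s e₀ ∈ u :: l.map t := by
  rw [h.cons_map_tgt_eq]
  exact List.mem_append_left [w] (List.mem_map_of_mem he)

theorem IsPath.finish_mem_support (h : IsPath s t u l w) : w ∈ u :: l.map t := by
  rw [h.cons_map_tgt_eq]
  exact List.mem_append_right _ (List.mem_singleton_self w)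

theorem exists_maximal_isPath (hwf : WellFounded fun b a => ∃ e, s e = a ∧ t e = b)
    (hp : ∀ e₀ e, s e = t e₀ → ∃ f, s f = t e₀ ∧ p f) (e₀ : E) :
    ∃ l w, IsPath s t (t e₀) l w ∧ (∀ e ∈ l, p e) ∧ ∀ e, s e ≠ w := by
  generalize hv : t e₀ = v
  induction v using hwf.induction generalizing e₀ with
  | _ v ih =>
    by_cases hend : ∀ e, s e ≠ v
    · exact ⟨[], v, rfl, by simp, hend⟩
    · obtain ⟨e, he⟩ := not_forall_not.1 hend
      obtain ⟨f, hf, hpf⟩ := hp e₀ e (he.trans hv.symm)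
      obtain ⟨l, w, hl, hpl, hw⟩ := ih (t f) ⟨f, hf.trans hv, rfl⟩ f rfl
      exact ⟨f :: l, w, ⟨hf.trans hv, hl⟩, List.forall_mem_cons.2 ⟨hpf, hpl⟩, hw⟩

theorem IsPath.eq_of_maximal (hp : ∀ e₀ e f, s e = t e₀ → s f = t e₀ → p e → p f → e = f)
    (h : IsPath s t (t e₀) l w) (hl : ∀ e ∈ l, p e) (hw : ∀ e, s e ≠ w)
    (h' : IsPath s t (t e₀) l' w') (hl' : ∀ e ∈ l', p e) (hw' : ∀ e, s e ≠ w') : l = l' := by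
  induction l generalizing l' e₀ with
  | nil =>
    cases l' with
    | nil => rfl
    | cons f l' => exact absurd (h'.1.trans h) (hw f)
  | cons e l ih =>
    cases l' with
    | nil => exact absurd (h.1.trans h') (hw' e)
    | cons f l' =>
      rw [List.forall_mem_cons] at hl hl'
      obtain rfl := hp e₀ e f h.1 h'.1 hl.1 hl'.1
      rw [ih h.2 hl.2 h'.2 hl'.2]

end Paths

variable {G : DAG} {F : G.Framing}

section Order

/-- `G.Precedes u v`: some path of positive length leads from `u` to `v`. -/
def Precedes (G : DAG) : G.V → G.V → Prop :=
  Relation.TransGen fun a b => ∃ e, G.src e = a ∧ G.tgt e = b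

instance : IsStrictOrder G.V G.Precedes where
  irrefl := G.acyclic
  trans _ _ _ := .trans

theorem precedes_src_tgt (e : G.E) : G.Precedes (G.src e) (G.tgt e) :=
  .single ⟨e, rfl, rfl⟩

theorem wellFounded_precedes (G : DAG) : WellFounded G.Precedes :=
  Finite.wellFounded_of_trans_of_irrefl G.Precedes

theorem wellFounded_swap_precedes (G : DAG) : WellFounded (Function.swap G.Precedes) :=
  Finite.wellFounded_of_trans_of_irrefl (Function.swap G.Precedes)

theorem IsPath.pairwise_precedes {u w : G.V} {l : List G.E} (h : IsPath G.src G.tgt u l w) :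
    (u :: l.map G.tgt).Pairwise G.Precedes := by
  refine List.IsChain.pairwise ?_
  induction l generalizing u with
  | nil => exact .singleton u
  | cons e l ih =>
    exact List.isChain_cons_cons.2 ⟨h.1 ▸ precedes_src_tgt e, ih h.2⟩

theorem IsPath.nodup {u w : G.V} {l : List G.E} (h : IsPath G.src G.tgt u l w) :
    (u :: l.map G.tgt).Nodup :=
  h.pairwise_precedes.imp fun hab => ne_of_irrefl hab

theorem IsPath.eq_of_tgt_eq {u w : G.V} {l : List G.E} {e f : G.E}
    (h : IsPath G.src G.tgt u l w) (he : e ∈ l) (hf : f ∈ l) (hef : G.tgt e = G.tgt f) : e = f :=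
  List.inj_on_of_nodup_map h.nodup.of_cons he hf hef

theorem IsPath.eq_of_src_eq {u w : G.V} {l : List G.E} {e f : G.E}
    (h : IsPath G.src G.tgt u l w) (he : e ∈ l) (hf : f ∈ l) (hef : G.src e = G.src f) : e = f := by
  have hnodup := h.nodup
  rw [h.cons_map_tgt_eq] at hnodup
  exact List.inj_on_of_nodup_map (List.nodup_append.1 hnodup).1 he hf hef

theorem isInner_of_tgt_eq_src {e f : G.E} (h : G.tgt e = G.src f) : G.IsInner (G.tgt e) :=
  ⟨fun hsource => hsource e rfl, fun hsink => hsink f h.symm⟩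

end Order

section Routes

variable {p q : G.E → Prop} {u w : G.V} {l : List G.E}

theorem Route.exists_isPath (R : G.Route) :
    ∃ u w, IsPath G.src G.tgt u R.edges w ∧ G.IsSource u ∧ G.IsSink w :=
  ⟨_, _, (isPath_iff_isChain R.ne).2 ⟨R.chain, rfl, rfl⟩, R.source_start, R.sink_end⟩

theorem Route.ext_edges {R S : G.Route} (h : R.edges = S.edges) : R = S := by
  cases R; cases S; congr

/-- `R.Extends p q l`: the route `R` contains the block of edges `l`, all its edges before that
block satisfy `p` and all its edges after it satisfy `q`. -/
def Route.Extends (p q : G.E → Prop) (l : List G.E) (R : G.Route) : Prop :=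
  ∃ b c, R.edges = b ++ l ++ c ∧ (∀ e ∈ b, p e) ∧ ∀ e ∈ c, q e

theorem exists_route_extending (hin : ∀ v, G.IsInner v → ∃ e, G.tgt e = v ∧ p e)
    (hout : ∀ v, G.IsInner v → ∃ e, G.src e = v ∧ q e)
    (hl : l ≠ []) (hpath : IsPath G.src G.tgt u l w) : ∃ R : G.Route, R.Extends p q l := by
  have hchain := (isPath_iff_isChain hl).1 hpath
  obtain ⟨b, x, hb, hpb, hx⟩ := exists_maximal_isPath (s := G.tgt) (t := G.src) (p := p)
    (G.wellFounded_precedes.mono fun a b ⟨e, hb, ha⟩ => ha ▸ hb ▸ precedes_src_tgt e)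
    (fun e₀ e he => hin _ (he ▸ isInner_of_tgt_eq_src he)) (l.head hl)
  obtain ⟨c, y, hc, hqc, hy⟩ := exists_maximal_isPath (s := G.src) (t := G.tgt) (p := q)
    (G.wellFounded_swap_precedes.mono fun a b ⟨e, hb, ha⟩ => ha ▸ hb ▸ precedes_src_tgt e)
    (fun e₀ e he => hout _ (isInner_of_tgt_eq_src he.symm)) (l.getLast hl)
  rw [hchain.2.1] at hb
  rw [hchain.2.2] at hc
  have hne : b.reverse ++ l ++ c ≠ [] := by simp [hl]
  have hroute : IsPath G.src G.tgt x (b.reverse ++ l ++ c) y :=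
    isPath_append.2 ⟨w, isPath_append.2 ⟨u, isPath_reverse.2 hb, hpath⟩, hc⟩
  obtain ⟨hch, hhead, hlast⟩ := (isPath_iff_isChain hne).1 hroute
  exact ⟨⟨_, hne, hch, hhead ▸ hx, hlast ▸ hy⟩, b.reverse, c, rfl,
    fun e he => hpb e (List.mem_reverse.1 he), hqc⟩

theorem Route.isPath_before_after {R : G.Route} {b c : List G.E} (hl : l ≠ [])
    (hR : R.edges = b ++ l ++ c) :
    (∃ x, IsPath G.tgt G.src (G.src (l.head hl)) b.reverse x ∧ G.IsSource x) ∧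
      ∃ y, IsPath G.src G.tgt (G.tgt (l.getLast hl)) c y ∧ G.IsSink y := by
  obtain ⟨x, y, hpath, hx, hy⟩ := R.exists_isPath
  rw [hR] at hpath
  obtain ⟨w, hbl, hc⟩ := isPath_append.1 hpath
  obtain ⟨u, hb, hl'⟩ := isPath_append.1 hbl
  obtain ⟨-, rfl, rfl⟩ := (isPath_iff_isChain hl).1 hl'
  exact ⟨⟨x, isPath_reverse.2 hb, hx⟩, y, hc, hy⟩

theorem Route.Extends.eq {R S : G.Route}
    (hin : ∀ e f, G.tgt e = G.tgt f → G.IsInner (G.tgt e) → p e → p f → e = f)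
    (hout : ∀ e f, G.src e = G.src f → G.IsInner (G.src e) → q e → q f → e = f)
    (hl : l ≠ []) (hR : R.Extends p q l) (hS : S.Extends p q l) : R = S := by
  obtain ⟨b, c, hRe, hb, hc⟩ := hR
  obtain ⟨b', c', hSe, hb', hc'⟩ := hS
  obtain ⟨⟨x, hbx, hx⟩, y, hcy, hy⟩ := Route.isPath_before_after hl hRe
  obtain ⟨⟨x', hbx', hx'⟩, y', hcy', hy'⟩ := Route.isPath_before_after hl hSe
  have hbb : b.reverse = b'.reverse := hbx.eq_of_maximal (p := p)
    (fun e₀ e f he hf => hin e f (he.trans hf.symm) (isInner_of_tgt_eq_src he))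
    (by simpa using hb) hx hbx' (by simpa using hb') hx'
  have hcc : c = c' := hcy.eq_of_maximal
    (fun e₀ e f he hf => hout e f (he.trans hf.symm) (he ▸ isInner_of_tgt_eq_src he.symm))
    hc hy hcy' hc' hy'
  exact Route.ext_edges (by rw [hRe, hSe, List.reverse_injective hbb, hcc])

end Routes

section Framings

theorem exists_min_pair_of_card_fiber_eq_two {α β : Type*} {f : α → β} {v : β}
    [Fintype {a // f a = v}] {r : α → α → Prop} (hirrefl : ∀ a, ¬ r a a)
    (htrans : ∀ {a b c}, r a b → r b c → r a c) (hcard : Fintype.card {a // f a = v} = 2)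
    (htotal : ∀ a b, f a = v → f b = v → a ≠ b → r a b ∨ r b a) :
    ∃ a b, r a b ∧ (∀ c, f c = f a → c ≠ a → r a c) ∧ (¬ ∀ c, f c = f b → c ≠ b → r b c) ∧
      ∀ c, f c = v ↔ c = a ∨ c = b := by
  classical
  obtain ⟨a, b, hab, hlt, hfiber⟩ :
      ∃ a b, a ≠ b ∧ r a b ∧ ∀ c, f c = v ↔ c = a ∨ c = b := by
    obtain ⟨a, b, hab, huniv⟩ := Finset.card_eq_two.1 hcard
    have hfiber : ∀ c, f c = v ↔ c = a ∨ c = b := fun c => by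
      refine ⟨fun hc => ?_, by rintro (rfl | rfl); exacts [a.2, b.2]⟩
      simpa [huniv, Subtype.ext_iff] using Finset.mem_univ (⟨c, hc⟩ : {a // f a = v})
    have hne : (a : α) ≠ b := Subtype.coe_ne_coe.2 hab
    rcases htotal a b a.2 b.2 hne with h | h
    · exact ⟨a, b, hne, h, hfiber⟩
    · exact ⟨b, a, hne.symm, h, fun c => (hfiber c).trans or_comm⟩
  have ha : f a = v := (hfiber a).2 (.inl rfl)
  have hb : f b = v := (hfiber b).2 (.inr rfl)
  refine ⟨a, b, hlt, fun c hc hca => ?_, fun hmin => ?_, hfiber⟩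
  · exact ((hfiber c).1 (hc.trans ha)).resolve_left hca ▸ hlt
  · exact hirrefl a (htrans hlt (hmin a (ha.trans hb.symm) hab))

theorem Full.exists_inlt_pair (hfull : G.Full) (F : G.Framing) {v : G.V} (hv : G.IsInner v) :
    ∃ a b, F.inlt a b ∧ G.MinIn F a ∧ ¬ G.MinIn F b ∧ ∀ e, G.tgt e = v ↔ e = a ∨ e = b :=
  exists_min_pair_of_card_fiber_eq_two F.inlt_irrefl F.inlt_trans (hfull v hv).1
    fun a b ha hb => F.inlt_total a b (ha.trans hb.symm) (ha.symm ▸ hv)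

theorem Full.exists_outlt_pair (hfull : G.Full) (F : G.Framing) {v : G.V} (hv : G.IsInner v) :
    ∃ a b, F.outlt a b ∧ G.MinOut F a ∧ ¬ G.MinOut F b ∧ ∀ e, G.src e = v ↔ e = a ∨ e = b :=
  exists_min_pair_of_card_fiber_eq_two F.outlt_irrefl F.outlt_trans (hfull v hv).2
    fun a b ha hb => F.outlt_total a b (ha.trans hb.symm) (ha.symm ▸ hv)

theorem Full.not_idle (hfull : G.Full) (F : G.Framing) (e : G.E) : ¬ G.Idle e := by
  rintro (⟨hinner, huniq⟩ | ⟨hinner, huniq⟩)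
  · obtain ⟨a, b, hab, -, -, hfiber⟩ := hfull.exists_inlt_pair F hinner
    rw [huniq a ((hfiber a).2 (.inl rfl)), huniq b ((hfiber b).2 (.inr rfl))] at hab
    exact F.inlt_irrefl e hab
  · obtain ⟨a, b, hab, -, -, hfiber⟩ := hfull.exists_outlt_pair F hinner
    rw [huniq a ((hfiber a).2 (.inl rfl)), huniq b ((hfiber b).2 (.inr rfl))] at hab
    exact F.outlt_irrefl e hab

theorem conflict_iff {P Q : G.Route} : G.Conflict F P Q ↔
    ∃ a e m f c a' e' f' c', P.edges = a ++ e :: (m ++ f :: c) ∧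
      Q.edges = a' ++ e' :: (m ++ f' :: c') ∧ F.inlt e e' ∧ F.outlt f' f := by
  constructor
  · rintro ⟨v, a, b, c, d, g, g', hP, hQ, -, -, -, -, ⟨x, x', m, e, e', -, hg, hg', hee'⟩,
      n, y', y, f', f, -, rfl, rfl, hff'⟩
    refine ⟨x, e, m ++ n, f, y, x', e', f', y', ?_, ?_, hee', hff'⟩
    · simp [hP, hg]
    · simp [hQ, hg']
  · rintro ⟨a, e, m, f, c, a', e', f', c', hP, hQ, hee', hff'⟩
    exact ⟨G.tgt e, a, m ++ f :: c, a', m ++ f' :: c', e, e', by simp [hP], by simp [hQ], rfl,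
      (F.inlt_tgt hee').symm, by simp, by simp,
      ⟨a, a', [], e, e', fun h => F.inlt_irrefl e' (h ▸ hee'), rfl, rfl, hee'⟩,
      m, c', c, f', f, fun h => F.outlt_irrefl f (h ▸ hff'), rfl, rfl, hff'⟩

theorem Route.isPath_between {R : G.Route} {a m c : List G.E} {e f : G.E}
    (hR : R.edges = a ++ e :: (m ++ f :: c)) : IsPath G.src G.tgt (G.tgt e) m (G.src f) := by
  obtain ⟨x, y, hpath, -⟩ := R.exists_isPath
  rw [hR] at hpath
  obtain ⟨-, -, -, hrest⟩ := isPath_append.1 hpath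
  obtain ⟨w, hm, rfl, -⟩ := isPath_append.1 hrest
  exact hm

theorem IsPath.isInner_ends {e f : G.E} {m : List G.E}
    (hm : IsPath G.src G.tgt (G.tgt e) m (G.src f)) :
    G.IsInner (G.tgt e) ∧ G.IsInner (G.src f) := by
  have hsources : G.tgt e ∈ m.map G.src ++ [G.src f] := hm.cons_map_tgt_eq ▸ List.mem_cons_self
  have htargets : G.src f ∈ G.tgt e :: m.map G.tgt := hm.finish_mem_support
  refine ⟨⟨fun h => h e rfl, fun h => ?_⟩, fun h => ?_, fun h => h f rfl⟩
  · obtain ⟨k, -, hk⟩ : ∃ k ∈ m ++ [f], G.src k = G.tgt e :=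
      List.mem_map.1 (by rwa [List.map_append])
    exact h k hk
  · obtain ⟨k, -, hk⟩ : ∃ k ∈ e :: m, G.tgt k = G.src f := List.mem_map.1 htargets
    exact h k hk

theorem exists_route_through {e f : G.E} {m : List G.E}
    (hm : IsPath G.src G.tgt (G.tgt e) m (G.src f)) :
    ∃ (R : G.Route) (a c : List G.E), R.edges = a ++ e :: (m ++ f :: c) := by
  obtain ⟨R, a, c, hR, -⟩ := exists_route_extending (p := fun _ => True) (q := fun _ => True)
    (l := e :: (m ++ [f])) (u := G.src e) (w := G.tgt f)
    (fun v hv => by simpa [IsSource] using hv.1) (fun v hv => by simpa [IsSink] using hv.2)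
    (List.cons_ne_nil _ _) ⟨rfl, isPath_append.2 ⟨_, hm, rfl, rfl⟩⟩
  exact ⟨R, a, c, by simpa using hR⟩

theorem Exceptional.minIn_iff_minOut (hfull : G.Full) {R : G.Route} (hexc : G.Exceptional F R)
    {a m c : List G.E} {e f : G.E} (hR : R.edges = a ++ e :: (m ++ f :: c)) :
    G.MinIn F e ↔ G.MinOut F f := by
  have hm := R.isPath_between hR
  obtain ⟨he, hf⟩ := hm.isInner_ends
  obtain ⟨e₁, e₂, hlt_in, hmin₁, hmin₂, hfib_in⟩ := hfull.exists_inlt_pair F he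
  obtain ⟨f₁, f₂, hlt_out, hmout₁, hmout₂, hfib_out⟩ := hfull.exists_outlt_pair F hf
  -- Otherwise the route through the other edge at both ends of `m` conflicts with `R`.
  have hcross : ∀ e' f', G.tgt e' = G.tgt e → G.src f' = G.src f →
      ¬ (F.inlt e e' ∧ F.outlt f' f) ∧ ¬ (F.inlt e' e ∧ F.outlt f f') := by
    intro e' f' he' hf'
    obtain ⟨S, a', c', hS⟩ := exists_route_through (e := e') (f := f') (he' ▸ hf' ▸ hm)
    exact ⟨fun h => (hexc S).1 (conflict_iff.2 ⟨a, e, m, f, c, a', e', f', c', hR, hS, h⟩),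
      fun h => (hexc S).2 (conflict_iff.2 ⟨a', e', m, f', c', a, e, f, c, hS, hR, h⟩)⟩
  have he₁ := (hfib_in e₁).2 (.inl rfl)
  have he₂ := (hfib_in e₂).2 (.inr rfl)
  have hf₁ := (hfib_out f₁).2 (.inl rfl)
  have hf₂ := (hfib_out f₂).2 (.inr rfl)
  rcases (hfib_in e).1 rfl with rfl | rfl <;> rcases (hfib_out f).1 rfl with rfl | rfl
  · exact iff_of_true hmin₁ hmout₁
  · exact absurd ⟨hlt_in, hlt_out⟩ (hcross e₂ f₁ he₂ hf₁).1
  · exact absurd ⟨hlt_in, hlt_out⟩ (hcross e₁ f₂ he₁ hf₂).2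
  · exact iff_of_false hmin₂ hmout₂

theorem Route.exists_edges_eq_cons_cons {R : G.Route} {e : G.E} (he : e ∈ R.edges)
    (hs : G.IsInner (G.src e)) (ht : G.IsInner (G.tgt e)) :
    ∃ a g k c, R.edges = a ++ g :: e :: k :: c := by
  obtain ⟨b, c, hR⟩ := List.append_of_mem he
  obtain ⟨⟨x, hb, hx⟩, y, hc, hy⟩ := R.isPath_before_after (l := [e]) (by simp) (by simpa using hR)
  rcases List.eq_nil_or_concat' b with rfl | ⟨a, g, rfl⟩
  · exact absurd ((show G.src e = x from hb) ▸ hx) hs.1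
  cases c with
  | nil => exact absurd ((show G.tgt e = y from hc) ▸ hy) ht.2
  | cons k c => exact ⟨a, g, k, c, by simpa using hR⟩

theorem Full.minIn_iff_minOut (hfull : G.Full) (hample : G.Ample F) {e : G.E}
    (hs : G.IsInner (G.src e)) (ht : G.IsInner (G.tgt e)) : G.MinIn F e ↔ G.MinOut F e := by
  obtain ⟨R, hexc, he⟩ := hample e (hfull.not_idle F e)
  obtain ⟨a, g, k, c, hR⟩ := R.exists_edges_eq_cons_cons he hs ht
  calc G.MinIn F e ↔ G.MinOut F k :=
        hexc.minIn_iff_minOut hfull (m := []) (a := a ++ [g]) (by simpa using hR)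
    _ ↔ G.MinIn F g := (hexc.minIn_iff_minOut hfull (m := [e]) hR).symm
    _ ↔ G.MinOut F e := hexc.minIn_iff_minOut hfull (m := []) hR

theorem weight_eq_one_or_two (F : G.Framing) (e : G.E) : G.weight F e = 1 ∨ G.weight F e = 2 := by
  unfold weight
  split_ifs
  · exact .inl rfl
  · exact .inr rfl

theorem weight_ne_one_iff {e : G.E} : G.weight F e ≠ 1 ↔ G.weight F e = 2 := by
  rcases weight_eq_one_or_two F e with h | h <;> simp [h]

theorem weight_ne_two_iff {e : G.E} : G.weight F e ≠ 2 ↔ G.weight F e = 1 := by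
  rcases weight_eq_one_or_two F e with h | h <;> simp [h]

theorem weight_eq_one_iff {e : G.E} : G.weight F e = 1 ↔
    (G.IsInner (G.tgt e) → G.MinIn F e) ∧ (G.IsInner (G.src e) → G.MinOut F e) := by
  simp [weight]

theorem Full.weight_eq_one_iff_minIn (hfull : G.Full) (hample : G.Ample F) {e : G.E}
    (ht : G.IsInner (G.tgt e)) : G.weight F e = 1 ↔ G.MinIn F e :=
  weight_eq_one_iff.trans ⟨fun h => h.1 ht,
    fun h => ⟨fun _ => h, fun hs => (hfull.minIn_iff_minOut hample hs ht).1 h⟩⟩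

theorem Full.weight_eq_one_iff_minOut (hfull : G.Full) (hample : G.Ample F) {e : G.E}
    (hs : G.IsInner (G.src e)) : G.weight F e = 1 ↔ G.MinOut F e :=
  weight_eq_one_iff.trans ⟨fun h => h.2 hs,
    fun h => ⟨fun ht => (hfull.minIn_iff_minOut hample hs ht).2 h, fun _ => h⟩⟩

theorem Full.weight_of_inlt (hfull : G.Full) (hample : G.Ample F) {e f : G.E}
    (h : F.inlt e f) : G.weight F e = 1 ∧ G.weight F f = 2 := by
  have he : G.IsInner (G.tgt e) := F.inlt_inner h
  rw [← weight_ne_one_iff, hfull.weight_eq_one_iff_minIn hample he, ne_eq,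
    hfull.weight_eq_one_iff_minIn hample (F.inlt_tgt h ▸ he)]
  obtain ⟨a, b, hab, hmin, hnot, hfiber⟩ := hfull.exists_inlt_pair F he
  rcases (hfiber e).1 rfl with rfl | rfl <;> rcases (hfiber f).1 (F.inlt_tgt h).symm with rfl | rfl
  · exact absurd h (F.inlt_irrefl _)
  · exact ⟨hmin, hnot⟩
  · exact absurd (F.inlt_trans h hab) (F.inlt_irrefl _)
  · exact absurd h (F.inlt_irrefl _)

theorem Full.weight_of_outlt (hfull : G.Full) (hample : G.Ample F) {e f : G.E}
    (h : F.outlt e f) : G.weight F e = 1 ∧ G.weight F f = 2 := by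
  have he : G.IsInner (G.src e) := F.outlt_inner h
  rw [← weight_ne_one_iff, hfull.weight_eq_one_iff_minOut hample he, ne_eq,
    hfull.weight_eq_one_iff_minOut hample (F.outlt_src h ▸ he)]
  obtain ⟨a, b, hab, hmin, hnot, hfiber⟩ := hfull.exists_outlt_pair F he
  rcases (hfiber e).1 rfl with rfl | rfl <;> rcases (hfiber f).1 (F.outlt_src h).symm with rfl | rfl
  · exact absurd h (F.outlt_irrefl _)
  · exact ⟨hmin, hnot⟩
  · exact absurd (F.outlt_trans h hab) (F.outlt_irrefl _)
  · exact absurd h (F.outlt_irrefl _)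

/-- A framing is balanced when each inner vertex has, for either weight, exactly one incoming and
exactly one outgoing edge of that weight. This is the only consequence of fullness and ampleness
that the module theory needs: it is what makes `Λ(G)` gentle. -/
structure Framing.Balanced (F : G.Framing) : Prop where
  existsUnique_in : ∀ {v} {i : ℕ}, G.IsInner v → i = 1 ∨ i = 2 →
    ∃! e, G.tgt e = v ∧ G.weight F e = i
  existsUnique_out : ∀ {v} {i : ℕ}, G.IsInner v → i = 1 ∨ i = 2 →
    ∃! e, G.src e = v ∧ G.weight F e = i

theorem Framing.Balanced.eq_of_src_eq (hF : F.Balanced) {v : G.InnerV} {e f : G.E}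
    (he : G.src e = v.1) (hf : G.src f = v.1) (hw : G.weight F e = G.weight F f) : e = f :=
  (hF.existsUnique_out v.2 (weight_eq_one_or_two F f)).unique ⟨he, hw⟩ ⟨hf, rfl⟩

theorem Framing.Balanced.eq_of_tgt_eq (hF : F.Balanced) {v : G.InnerV} {e f : G.E}
    (he : G.tgt e = v.1) (hf : G.tgt f = v.1) (hw : G.weight F e = G.weight F f) : e = f :=
  (hF.existsUnique_in v.2 (weight_eq_one_or_two F f)).unique ⟨he, hw⟩ ⟨hf, rfl⟩

theorem existsUnique_of_pair {α : Type*} {P : α → Prop} {wt : α → ℕ} {a b : α} {i : ℕ}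
    (ha : wt a = 1) (hb : wt b = 2) (hP : ∀ c, P c ↔ c = a ∨ c = b) (hi : i = 1 ∨ i = 2) :
    ∃! c, P c ∧ wt c = i := by
  rcases hi with rfl | rfl
  · exact ⟨a, ⟨(hP a).2 (.inl rfl), ha⟩, by grind⟩
  · exact ⟨b, ⟨(hP b).2 (.inr rfl), hb⟩, by grind⟩

theorem Full.balanced (hfull : G.Full) (hample : G.Ample F) : F.Balanced where
  existsUnique_in hv hi := by
    obtain ⟨a, b, hab, -, -, hfiber⟩ := hfull.exists_inlt_pair F hv
    obtain ⟨ha, hb⟩ := hfull.weight_of_inlt hample hab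
    exact existsUnique_of_pair ha hb hfiber hi
  existsUnique_out hv hi := by
    obtain ⟨a, b, hab, -, -, hfiber⟩ := hfull.exists_outlt_pair F hv
    obtain ⟨ha, hb⟩ := hfull.weight_of_outlt hample hab
    exact existsUnique_of_pair ha hb hfiber hi

theorem Full.exceptional_iff (hfull : G.Full) (hample : G.Ample F) {R : G.Route} :
    G.Exceptional F R ↔ ∀ e ∈ R.edges, ∀ f ∈ R.edges, G.weight F e = G.weight F f := by
  constructor
  · intro hexc
    have hchain : (R.edges.map (G.weight F)).IsChain (· = ·) := by
      rw [List.isChain_map, List.isChain_iff_forall_rel_of_append_cons_cons]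
      intro e f a c hR
      obtain ⟨he, hf⟩ := (R.isPath_between (m := []) hR).isInner_ends
      have hone : G.weight F e = 1 ↔ G.weight F f = 1 := by
        rw [hfull.weight_eq_one_iff_minIn hample he, hfull.weight_eq_one_iff_minOut hample hf]
        exact hexc.minIn_iff_minOut hfull (m := []) hR
      grind [weight_eq_one_or_two]
    have hall := hchain.pairwise.forall_of_forall fun _ _ => rfl
    exact fun e he f hf => hall (List.mem_map_of_mem he) (List.mem_map_of_mem hf)
  · intro hconst S
    refine ⟨fun hconf => ?_, fun hconf => ?_⟩ <;>
      obtain ⟨a, e, m, f, c, a', e', f', c', hP, hQ, hin, hout⟩ := conflict_iff.1 hconf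
    · have := hconst e (by simp [hP]) f (by simp [hP])
      grind [hfull.weight_of_inlt hample hin, hfull.weight_of_outlt hample hout]
    · have := hconst e' (by simp [hQ]) f' (by simp [hQ])
      grind [hfull.weight_of_inlt hample hin, hfull.weight_of_outlt hample hout]

theorem Full.not_exceptional_iff (hfull : G.Full) (hample : G.Ample F) {R : G.Route} :
    ¬ G.Exceptional F R ↔
      (∃ e ∈ R.edges, G.weight F e = 1) ∧ ∃ e ∈ R.edges, G.weight F e = 2 := by
  rw [hfull.exceptional_iff hample]
  grind [weight_eq_one_or_two]

end Framings

section Lists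

variable {α : Type*} {P : α → Prop} {b b' c c' m : List α} {d d' : α}

theorem exists_first_of_exists_not (h : ∃ d ∈ m, ¬ P d) :
    ∃ b d c, m = b ++ d :: c ∧ (∀ e ∈ b, P e) ∧ ¬ P d := by
  classical
  obtain ⟨d, hd⟩ := Option.isSome_iff_exists.1 <|
    List.find?_isSome (p := fun d => ¬ P d).2 (by simpa using h)
  obtain ⟨hd, b, c, hm, hb⟩ := List.find?_eq_some_iff_append.1 hd
  exact ⟨b, d, c, hm, by simpa using hb, by simpa using hd⟩

theorem exists_last_of_exists_not (h : ∃ d ∈ m, ¬ P d) :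
    ∃ b d c, m = b ++ d :: c ∧ ¬ P d ∧ ∀ e ∈ c, P e := by
  obtain ⟨b, d, c, hm, hb, hd⟩ :=
    exists_first_of_exists_not (m := m.reverse) (by simpa using h)
  exact ⟨c.reverse, d, b.reverse, by simpa using congrArg List.reverse hm, hd, by simpa using hb⟩

theorem append_cons_inj_of_forall_left (hb : ∀ e ∈ b, P e) (hd : ¬ P d) (hb' : ∀ e ∈ b', P e)
    (hd' : ¬ P d') (h : b ++ d :: c = b' ++ d' :: c') : b = b' ∧ d = d' ∧ c = c' := by
  induction b generalizing b' with
  | nil => cases b' <;> grind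
  | cons e b ih => cases b' <;> grind

theorem append_cons_inj_of_forall_right (hc : ∀ e ∈ c, P e) (hd : ¬ P d) (hc' : ∀ e ∈ c', P e)
    (hd' : ¬ P d') (h : b ++ d :: c = b' ++ d' :: c') : b = b' ∧ d = d' ∧ c = c' := by
  obtain ⟨h₁, h₂, h₃⟩ := append_cons_inj_of_forall_left (b := c.reverse) (c := b.reverse)
    (b' := c'.reverse) (c' := b'.reverse) (by simpa using hc) hd (by simpa using hc') hd'
    (by simpa using congrArg List.reverse h)
  exact ⟨List.reverse_injective h₃, h₂, List.reverse_injective h₁⟩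

end Lists

section InnerPaths

/-- A path of `G` all of whose vertices are inner, possibly a single vertex. Forgetting the
orientation, these are the strings of the gentle algebra `Λ(G)`. -/
structure InnerPath (G : DAG) where
  start : G.InnerV
  finish : G.InnerV
  edges : List G.E
  isPath : IsPath G.src G.tgt start.1 edges finish.1

namespace InnerPath

variable {p q : G.InnerPath} {v : G.InnerV}

theorem ext_edges (hstart : p.start = q.start) (hedges : p.edges = q.edges) : p = q := by
  obtain ⟨u, w, l, h⟩ := p
  obtain ⟨u', w', l', h'⟩ := q
  obtain rfl : u = u' := hstart
  obtain rfl : l = l' := hedges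
  obtain rfl : w = w' := Subtype.ext (h.finish_unique h')
  rfl

/-- The vertices of an inner path, in the order in which they are visited. -/
def support (p : G.InnerPath) : List G.V :=
  p.start.1 :: p.edges.map G.tgt

theorem start_mem_support (p : G.InnerPath) : p.start.1 ∈ p.support :=
  List.mem_cons_self

theorem isInner_of_mem_support (p : G.InnerPath) {v : G.V} (hv : v ∈ p.support) :
    G.IsInner v := by
  have hsources : v ∈ p.edges.map G.src ++ [p.finish.1] := p.isPath.cons_map_tgt_eq ▸ hv
  refine ⟨fun h => ?_, fun h => ?_⟩
  · rcases List.mem_cons.1 hv with rfl | hv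
    · exact p.start.2.1 h
    · obtain ⟨e, -, he⟩ := List.mem_map.1 hv
      exact h e he
  · rcases List.mem_append.1 hsources with hv | hv
    · obtain ⟨e, -, he⟩ := List.mem_map.1 hv
      exact h e he
    · exact p.finish.2.2 (List.mem_singleton.1 hv ▸ h)

theorem isInner_src (p : G.InnerPath) {e : G.E} (he : e ∈ p.edges) : G.IsInner (G.src e) :=
  p.isInner_of_mem_support (p.isPath.src_mem_support he)

theorem isInner_tgt (p : G.InnerPath) {e : G.E} (he : e ∈ p.edges) : G.IsInner (G.tgt e) :=
  p.isInner_of_mem_support (IsPath.tgt_mem_support he)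

theorem exists_edge_src_eq_of_ne_finish {z : G.V} (hz : z ∈ p.support)
    (hne : z ≠ p.finish.1) : ∃ e ∈ p.edges, G.src e = z := by
  have hmem : z ∈ p.edges.map G.src ++ [p.finish.1] := p.isPath.cons_map_tgt_eq ▸ hz
  simpa [hne] using hmem

theorem exists_edge_tgt_eq_of_ne_start {z : G.V} (hz : z ∈ p.support)
    (hne : z ≠ p.start.1) : ∃ e ∈ p.edges, G.tgt e = z := by
  simpa [support, hne] using hz

/-- The inner path consisting of a single vertex. -/
def nil (v : G.InnerV) : G.InnerPath :=
  ⟨v, v, [], rfl⟩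

/-- The inner path obtained from `p` by prepending an edge. -/
def cons (e : G.E) (p : G.InnerPath) (hs : G.src e = v.1) (ht : G.tgt e = p.start.1) :
    G.InnerPath :=
  ⟨v, p.finish, e :: p.edges, hs, ht ▸ p.isPath⟩

theorem mem_support_cons {e : G.E} {hs : G.src e = v.1} {ht : G.tgt e = p.start.1} {w : G.V} :
    w ∈ (p.cons e hs ht).support ↔ w = v.1 ∨ w ∈ p.support := by
  simp [support, cons, ht]

theorem notMem_support_of_src_eq {e : G.E} (hs : G.src e = v.1) (ht : G.tgt e = p.start.1) :
    v.1 ∉ p.support := by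
  have h := (p.cons e hs ht).isPath.nodup
  rw [show (p.cons e hs ht).edges = e :: p.edges from rfl, List.map_cons, ht] at h
  exact (List.nodup_cons.1 h).1

end InnerPath

end InnerPaths

section Cores

/-- `IsCore F x l`: `l` is the block of edges by which a non-exceptional route encodes `x`. All
edges of such a route outside this block have weight `1` before it and weight `2` after it. -/
inductive IsCore (F : G.Framing) : G.InnerPath ⊕ G.InnerV → List G.E → Prop
  | path {p : G.InnerPath} {a b : G.E} (ha : G.tgt a = p.start.1) (wa : G.weight F a = 2)
      (hb : G.src b = p.finish.1) (wb : G.weight F b = 1) :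
      IsCore F (.inl p) (a :: (p.edges ++ [b]))
  | vertex {v : G.InnerV} {a b : G.E} (ha : G.tgt a = v.1) (wa : G.weight F a = 1)
      (hb : G.src b = v.1) (wb : G.weight F b = 2) : IsCore F (.inr v) [a, b]

variable {x y : G.InnerPath ⊕ G.InnerV} {l l' : List G.E} {R : G.Route}

theorem IsCore.isPath (h : IsCore F x l) : l ≠ [] ∧ ∃ u w, IsPath G.src G.tgt u l w := by
  cases h with
  | @path p a b ha _ hb _ =>
    exact ⟨List.cons_ne_nil _ _, _, _, rfl, isPath_append.2 ⟨_, ha ▸ p.isPath, hb, rfl⟩⟩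
  | vertex ha _ hb _ => exact ⟨List.cons_ne_nil _ _, _, _, rfl, hb.trans ha.symm, rfl⟩

theorem IsCore.exists_weights (h : IsCore F x l) :
    (∃ e ∈ l, G.weight F e = 1) ∧ ∃ e ∈ l, G.weight F e = 2 := by
  cases h with
  | path _ wa _ wb => exact ⟨⟨_, by simp, wb⟩, _, by simp, wa⟩
  | vertex _ wa _ wb => exact ⟨⟨_, by simp, wa⟩, _, by simp, wb⟩

theorem Framing.Balanced.existsUnique_isCore (hF : F.Balanced) (x : G.InnerPath ⊕ G.InnerV) :
    ∃! l, IsCore F x l := by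
  rcases x with p | v
  · obtain ⟨a, ⟨ha, wa⟩, ha'⟩ := hF.existsUnique_in p.start.2 (.inr rfl)
    obtain ⟨b, ⟨hb, wb⟩, hb'⟩ := hF.existsUnique_out p.finish.2 (.inl rfl)
    refine ⟨_, .path ha wa hb wb, fun l hl => ?_⟩
    cases hl with
    | path hc wc hd wd => rw [ha' _ ⟨hc, wc⟩, hb' _ ⟨hd, wd⟩]
  · obtain ⟨a, ⟨ha, wa⟩, ha'⟩ := hF.existsUnique_in v.2 (.inl rfl)
    obtain ⟨b, ⟨hb, wb⟩, hb'⟩ := hF.existsUnique_out v.2 (.inr rfl)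
    refine ⟨_, .vertex ha wa hb wb, fun l hl => ?_⟩
    cases hl with
    | vertex hc wc hd wd => rw [ha' _ ⟨hc, wc⟩, hb' _ ⟨hd, wd⟩]

/-- `R.HasCore F x`: the route `R` encodes `x`. -/
def Route.HasCore (R : G.Route) (F : G.Framing) (x : G.InnerPath ⊕ G.InnerV) : Prop :=
  ∃ l, IsCore F x l ∧ R.Extends (fun e => G.weight F e = 1) (fun e => G.weight F e = 2) l

theorem Route.HasCore.exists_weights (h : R.HasCore F x) :
    (∃ e ∈ R.edges, G.weight F e = 1) ∧ ∃ e ∈ R.edges, G.weight F e = 2 := by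
  obtain ⟨l, hl, b, c, hR, -⟩ := h
  obtain ⟨⟨e, he, we⟩, f, hf, wf⟩ := hl.exists_weights
  exact ⟨⟨e, by simp [hR, he], we⟩, f, by simp [hR, hf], wf⟩

theorem Framing.Balanced.existsUnique_route_hasCore (hF : F.Balanced)
    (x : G.InnerPath ⊕ G.InnerV) : ∃! R : G.Route, R.HasCore F x := by
  obtain ⟨l, hl, hl'⟩ := hF.existsUnique_isCore x
  obtain ⟨hne, u, w, hpath⟩ := hl.isPath
  obtain ⟨R, hR⟩ := exists_route_extending (fun v hv => (hF.existsUnique_in hv (.inl rfl)).exists)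
    (fun v hv => (hF.existsUnique_out hv (.inr rfl)).exists) hne hpath
  refine ⟨R, ⟨l, hl, hR⟩, fun S ⟨k, hk, hS⟩ => ?_⟩
  obtain rfl := hl' k hk
  exact hS.eq
    (fun e f hef he we wf => (hF.existsUnique_in he (.inl rfl)).unique ⟨rfl, we⟩ ⟨hef.symm, wf⟩)
    (fun e f hef he we wf => (hF.existsUnique_out he (.inr rfl)).unique ⟨rfl, we⟩ ⟨hef.symm, wf⟩)
    hne hR

theorem Route.HasCore.eq (hx : R.HasCore F x) (hy : R.HasCore F y) : x = y := by
  obtain ⟨l, hl, b, c, hR, hb, hc⟩ := hx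
  obtain ⟨l', hl', b', c', hR', hb', hc'⟩ := hy
  have hone {e : G.E} (h : G.weight F e = 2) : ¬ G.weight F e = 1 := by simp [h]
  have htwo {e : G.E} (h : G.weight F e = 1) : ¬ G.weight F e = 2 := by simp [h]
  cases hl with
  | path ha wa hd wd =>
    cases hl' with
    | path ha' wa' hd' wd' =>
      obtain ⟨-, rfl, hrest⟩ := append_cons_inj_of_forall_left hb (hone wa) hb' (hone wa')
        (by simpa using hR.symm.trans hR')
      obtain ⟨hedges, -, -⟩ := append_cons_inj_of_forall_right hc (htwo wd) hc' (htwo wd') hrest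
      exact congrArg _ (InnerPath.ext_edges (Subtype.ext (ha.symm.trans ha')) hedges)
    | @vertex v a' d' ha' wa' hd' wd' =>
      obtain ⟨-, -, hrest⟩ := append_cons_inj_of_forall_left (b' := b' ++ [a']) hb (hone wa)
        (by grind) (hone wd') (by simpa using hR.symm.trans hR')
      exact absurd (hc' _ (hrest ▸ by simp)) (htwo wd)
  | @vertex v a d ha wa hd wd =>
    cases hl' with
    | path ha' wa' hd' wd' =>
      obtain ⟨-, -, hrest⟩ := append_cons_inj_of_forall_left (b := b ++ [a]) (by grind) (hone wd)
        hb' (hone wa') (by simpa using hR.symm.trans hR')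
      exact absurd (hc _ (hrest ▸ by simp)) (htwo wd')
    | @vertex v' a' d' ha' wa' hd' wd' =>
      obtain ⟨-, rfl, -⟩ := append_cons_inj_of_forall_left (P := fun e => G.weight F e = 1)
        (b := b ++ [a]) (b' := b' ++ [a']) (by grind) (hone wd) (by grind) (hone wd')
        (by simpa using hR.symm.trans hR')
      exact congrArg _ (Subtype.ext (hd.symm.trans hd'))

theorem Route.exists_hasCore (hone : ∃ e ∈ R.edges, G.weight F e = 1)
    (htwo : ∃ e ∈ R.edges, G.weight F e = 2) : ∃ x, R.HasCore F x := by
  simp only [← weight_ne_one_iff (F := F)] at htwo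
  obtain ⟨b, a, m, hR, hb, wa⟩ := exists_first_of_exists_not htwo
  by_cases hm : ∃ e ∈ m, ¬ G.weight F e = 2
  · obtain ⟨l, d, c, rfl, wd, hc⟩ := exists_last_of_exists_not hm
    have hl := R.isPath_between hR
    obtain ⟨ha, hd⟩ := hl.isInner_ends
    exact ⟨.inl ⟨⟨_, ha⟩, ⟨_, hd⟩, l, hl⟩, _,
      .path rfl (weight_ne_one_iff.1 wa) rfl (weight_ne_two_iff.1 wd), b, c, by simp [hR], hb, hc⟩
  · push Not at hm
    rcases List.eq_nil_or_concat' b with rfl | ⟨b, d, rfl⟩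
    · grind
    · rw [List.append_assoc] at hR
      have hda : IsPath G.src G.tgt (G.tgt d) [] (G.src a) := R.isPath_between hR
      exact ⟨.inr ⟨_, hda.isInner_ends.2⟩, _,
        .vertex hda (hb d (by simp)) rfl (weight_ne_one_iff.1 wa), b, m, by simp [hR],
        fun e he => hb e (by simp [he]), hm⟩

theorem Full.nonempty_route_equiv (hfull : G.Full) (hample : G.Ample F) :
    Nonempty ({R : G.Route // ¬ G.Exceptional F R} ≃ G.InnerPath ⊕ G.InnerV) := by
  have hunique := (hfull.balanced hample).existsUnique_route_hasCore
  choose core hcore using fun R : {R : G.Route // ¬ G.Exceptional F R} =>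
    have h := (hfull.not_exceptional_iff hample).1 R.2
    R.1.exists_hasCore h.1 h.2
  refine ⟨.ofBijective core ⟨fun R S hRS => Subtype.ext ?_, fun x => ?_⟩⟩
  · exact (hunique _).unique (hcore R) (hRS ▸ hcore S)
  · obtain ⟨R, hR, -⟩ := hunique x
    exact ⟨⟨R, (hfull.not_exceptional_iff hample).2 hR.exists_weights⟩, (hcore _).eq hR⟩

end Cores

section Representations

variable {u v w : G.InnerV}

theorem InnerV.ext (h : u.1 = v.1) : u = v :=
  Subtype.ext h

/-- An arrow from `u` to `v` in the quiver of `Λ(G)`, given by the edge of `G` it stems from. Having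
the endpoints as indices, arrows compose without transport along equalities of vertices. -/
@[ext]
structure Arrow (F : G.Framing) (u v : G.InnerV) where
  edge : G.E
  src_inner : G.IsInner (G.src edge)
  tgt_inner : G.IsInner (G.tgt edge)
  arrowSrc_eq : G.arrowSrc F edge src_inner tgt_inner = u
  arrowTgt_eq : G.arrowTgt F edge src_inner tgt_inner = v

theorem Arrow.ends (a : Arrow F u v) :
    (G.weight F a.edge = 1 ∧ G.src a.edge = u.1 ∧ G.tgt a.edge = v.1) ∨
      (G.weight F a.edge = 2 ∧ G.tgt a.edge = u.1 ∧ G.src a.edge = v.1) := by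
  obtain ⟨e, hs, ht, rfl, rfl⟩ := a
  rcases weight_eq_one_or_two F e with h | h <;> simp [arrowSrc, arrowTgt, h]

theorem Arrow.ends_of_weight_eq_one (a : Arrow F u v) (ha : G.weight F a.edge = 1) :
    G.src a.edge = u.1 ∧ G.tgt a.edge = v.1 :=
  a.ends.elim And.right fun h => by omega

theorem Arrow.ends_of_weight_eq_two (a : Arrow F u v) (ha : G.weight F a.edge = 2) :
    G.tgt a.edge = u.1 ∧ G.src a.edge = v.1 :=
  a.ends.elim (fun h => by omega) And.right

theorem exists_arrow_of_weight_eq_one {e : G.E} (he : G.weight F e = 1) (hu : G.src e = u.1)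
    (hv : G.tgt e = v.1) : ∃ a : Arrow F u v, a.edge = e :=
  ⟨⟨e, hu ▸ u.2, hv ▸ v.2, by simpa [arrowSrc, he] using InnerV.ext hu,
    by simpa [arrowTgt, he] using InnerV.ext hv⟩, rfl⟩

theorem exists_arrow_of_weight_eq_two {e : G.E} (he : G.weight F e = 2) (hu : G.tgt e = u.1)
    (hv : G.src e = v.1) : ∃ a : Arrow F u v, a.edge = e :=
  ⟨⟨e, hv ▸ v.2, hu ▸ u.2, by simpa [arrowSrc, he] using InnerV.ext hu,
    by simpa [arrowTgt, he] using InnerV.ext hv⟩, rfl⟩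

theorem Arrow.forall_of_edge_eq {P : ∀ {u v : G.InnerV}, Arrow F u v → Prop} {a : Arrow F u v}
    (ha : P a) {u' v' : G.InnerV} (b : Arrow F u' v') (hb : b.edge = a.edge) : P b := by
  obtain ⟨e, hs, ht, rfl, rfl⟩ := a
  obtain ⟨f, hs', ht', rfl, rfl⟩ := b
  obtain rfl : f = e := hb
  exact ha

theorem Framing.Balanced.forall_arrow_to (hF : F.Balanced)
    {P : ∀ {u : G.InnerV}, Arrow F u v → Prop} {a : Arrow F u v} (ha : P a)
    {u' : G.InnerV} (b : Arrow F u' v) (hab : G.weight F a.edge = G.weight F b.edge) : P b := by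
  rcases a.ends with ⟨wa, hu, hv⟩ | ⟨wa, hu, hv⟩ <;>
    rcases b.ends with ⟨wb, hu', hv'⟩ | ⟨wb, hu', hv'⟩
  · have h := hF.eq_of_tgt_eq hv hv' hab
    obtain rfl : u = u' := InnerV.ext (by rw [← hu, ← hu', h])
    exact Arrow.ext h ▸ ha
  · omega
  · omega
  · have h := hF.eq_of_src_eq hv hv' hab
    obtain rfl : u = u' := InnerV.ext (by rw [← hu, ← hu', h])
    exact Arrow.ext h ▸ ha

theorem Framing.Balanced.forall_arrow_from (hF : F.Balanced)
    {P : ∀ {w : G.InnerV}, Arrow F v w → Prop} {a : Arrow F v w} (ha : P a) {w' : G.InnerV}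
    (b : Arrow F v w') (hab : G.weight F a.edge = G.weight F b.edge) : P b := by
  rcases a.ends with ⟨wa, hv, hw⟩ | ⟨wa, hv, hw⟩ <;>
    rcases b.ends with ⟨wb, hv', hw'⟩ | ⟨wb, hv', hw'⟩
  · have h := hF.eq_of_src_eq hv hv' hab
    obtain rfl : w = w' := InnerV.ext (by rw [← hw, ← hw', h])
    exact Arrow.ext h ▸ ha
  · omega
  · omega
  · have h := hF.eq_of_tgt_eq hv hv' hab
    obtain rfl : w = w' := InnerV.ext (by rw [← hw, ← hw', h])
    exact Arrow.ext h ▸ ha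

variable {K : Type} [Field K] {M N : G.Rep F K}

/-- The linear map by which an arrow acts on a representation. -/
def Rep.act (M : G.Rep F K) : ∀ {u v : G.InnerV}, Arrow F u v → M.space u →ₗ[K] M.space v
  | _, _, ⟨e, hs, ht, rfl, rfl⟩ => M.map e hs ht

theorem Rep.map_cast_eq_act (M : G.Rep F K) {e : G.E} (hs : G.IsInner (G.src e))
    (ht : G.IsInner (G.tgt e)) (hu : u = G.arrowSrc F e hs ht) (x : M.space u) :
    M.map e hs ht (cast (congrArg M.space hu) x) = M.act ⟨e, hs, ht, hu.symm, rfl⟩ x := by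
  subst hu
  rfl

theorem Rep.act_act_of_weight_ne (M : G.Rep F K) (a : Arrow F u v) (b : Arrow F v w)
    (hab : G.weight F a.edge ≠ G.weight F b.edge) (x : M.space u) : M.act b (M.act a x) = 0 := by
  obtain ⟨e, hs, ht, rfl, rfl⟩ := a
  obtain ⟨f, hs', ht', hv, rfl⟩ := b
  exact (M.map_cast_eq_act hs' ht' hv.symm _).symm.trans (M.rel e f hs ht hs' ht' hv.symm hab x)

theorem RepHom.app_act (φ : RepHom M N) (a : Arrow F u v) (x : M.space u) :
    φ.app v (M.act a x) = N.act a (φ.app u x) := by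
  obtain ⟨e, hs, ht, rfl, rfl⟩ := a
  exact φ.comm e hs ht x

/-- A morphism of representations, given by linear maps commuting with the action of all arrows. -/
def RepHom.ofAct (φ : ∀ v, M.space v →ₗ[K] N.space v)
    (h : ∀ {u v} (a : Arrow F u v) x, φ v (M.act a x) = N.act a (φ u x)) : RepHom M N where
  app := φ
  comm e hs ht := h ⟨e, hs, ht, rfl, rfl⟩

/-- The vertices at which a representation is nonzero. -/
def Rep.vertexSupport (M : G.Rep F K) : Set G.InnerV :=
  {v | ∃ x : M.space v, x ≠ 0}

/-- The edges of `G` whose arrows act on a representation by a nonzero map. -/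
def Rep.edgeSupport (M : G.Rep F K) : Set G.E :=
  {e | ∃ (u v : G.InnerV) (a : Arrow F u v), a.edge = e ∧ M.act a ≠ 0}

theorem RepIso.vertexSupport_eq (h : RepIso M N) : M.vertexSupport = N.vertexSupport := by
  obtain ⟨φ, hφ⟩ := h
  ext v
  calc (∃ x : M.space v, x ≠ 0) ↔ ∃ x, φ.app v x ≠ 0 :=
        exists_congr fun x => (map_ne_zero_iff _ (hφ v).1).symm
    _ ↔ ∃ y : N.space v, y ≠ 0 := ((hφ v).2.exists (p := (· ≠ 0))).symm

theorem RepIso.edgeSupport_eq (h : RepIso M N) : M.edgeSupport = N.edgeSupport := by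
  obtain ⟨φ, hφ⟩ := h
  ext e
  refine exists_congr fun u => exists_congr fun v => exists_congr fun a => and_congr_right' ?_
  rw [ne_eq, ne_eq, not_iff_not, LinearMap.ext_iff, LinearMap.ext_iff, (hφ u).2.forall]
  refine forall_congr' fun x => ?_
  rw [← φ.app_act, LinearMap.zero_apply, LinearMap.zero_apply, map_eq_zero_iff _ (hφ v).1]

theorem repIso_of_retract (hM : Indecomposable M) (i : RepHom N M) (r : RepHom M N)
    (hri : ∀ v x, r.app v (i.app v x) = x) (hN : ∃ (v : G.InnerV) (x : N.space v), x ≠ 0) :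
    RepIso M N := by
  let π : RepHom M M :=
    ⟨fun v => i.app v ∘ₗ r.app v, fun e hs ht x => by simp [r.comm, i.comm]⟩
  refine ⟨r, fun v => ⟨?_, fun x => ⟨i.app v x, hri v x⟩⟩⟩
  rcases hM.2 π fun v x => by simp [π, hri] with hπ | hπ
  · obtain ⟨w, y, hy⟩ := hN
    exact absurd (by simpa [π, hri] using congrArg (r.app w) (hπ w (i.app w y))) hy
  · exact Function.LeftInverse.injective (g := i.app v) (hπ v)

end Representations

section StringModules

variable {K : Type} [Field K] {p q : G.InnerPath} {u v w : G.InnerV}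

theorem Arrow.ends_mem_support (a : Arrow F u v) (ha : a.edge ∈ p.edges) :
    u.1 ∈ p.support ∧ v.1 ∈ p.support := by
  have hs := p.isPath.src_mem_support ha
  have ht := IsPath.tgt_mem_support (t := G.tgt) (u := p.start.1) ha
  rcases a.ends with ⟨-, hu, hv⟩ | ⟨-, hu, hv⟩ <;> rw [← hu, ← hv]
  exacts [⟨hs, ht⟩, ⟨ht, hs⟩]

theorem Arrow.weight_eq_of_mem_edges (a : Arrow F u v) (b : Arrow F v w) (ha : a.edge ∈ p.edges)
    (hb : b.edge ∈ p.edges) : G.weight F a.edge = G.weight F b.edge := by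
  rcases a.ends with ⟨wa, -, hav⟩ | ⟨wa, -, hav⟩ <;>
    rcases b.ends with ⟨wb, hbv, -⟩ | ⟨wb, hbv, -⟩
  · rw [wa, wb]
  · rw [p.isPath.eq_of_tgt_eq ha hb (hav.trans hbv.symm)]
  · rw [p.isPath.eq_of_src_eq ha hb (hav.trans hbv.symm)]
  · rw [wa, wb]

namespace InnerPath

/-- The space of the string module of `p` at `v`, a line if `p` visits `v` and zero otherwise. -/
def stringSpace (p : G.InnerPath) (K : Type) [Field K] (v : G.InnerV) : Submodule K K :=
  if v.1 ∈ p.support then ⊤ else ⊥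

theorem mem_stringSpace {x : K} : x ∈ p.stringSpace K v ↔ (v.1 ∉ p.support → x = 0) := by
  by_cases hv : v.1 ∈ p.support <;> simp [stringSpace, hv]

theorem mem_stringSpace_of_mem (hv : v.1 ∈ p.support) (x : K) : x ∈ p.stringSpace K v :=
  mem_stringSpace.2 fun h => absurd hv h

theorem coe_cast_stringSpace (h : u = v) (x : p.stringSpace K u) :
    ((cast (congrArg (fun v => ↥(p.stringSpace K v)) h) x : p.stringSpace K v) : K) = x := by
  subst h
  rfl

/-- The string module of an inner path `p`: every arrow stemming from an edge of `p` acts as the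
identity of `K`, every other arrow as zero. -/
noncomputable def stringRep (p : G.InnerPath) (F : G.Framing) (K : Type) [Field K] :
    G.Rep F K where
  space v := p.stringSpace K v
  map e hs ht := LinearMap.codRestrict _
    ((if e ∈ p.edges then 1 else 0 : K) • Submodule.subtype _) fun x => by
      by_cases he : e ∈ p.edges
      · exact mem_stringSpace_of_mem
          ((⟨e, hs, ht, rfl, rfl⟩ : Arrow F _ _).ends_mem_support he).2 _
      · simp [he]
  rel e f hs ht hs' ht' h hef x := by
    refine Subtype.ext ?_
    rw [LinearMap.codRestrict_apply, LinearMap.smul_apply, Submodule.subtype_apply,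
      coe_cast_stringSpace h]
    by_cases he : e ∈ p.edges
    · have hf : f ∉ p.edges := fun hf => hef <|
        Arrow.weight_eq_of_mem_edges ⟨e, hs, ht, rfl, h⟩ ⟨f, hs', ht', rfl, rfl⟩ he hf
      simp [hf]
    · simp [he]

/-- The coordinate of an element of a string module at a vertex. -/
noncomputable def coord (p : G.InnerPath) (F : G.Framing) (K : Type) [Field K] (v : G.InnerV) :
    (p.stringRep F K).space v →ₗ[K] K :=
  (p.stringSpace K v).subtype

theorem coord_injective : Function.Injective (p.coord F K v) :=
  (p.stringSpace K v).injective_subtype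

theorem coord_eq_zero (hv : v.1 ∉ p.support) (x : (p.stringRep F K).space v) :
    p.coord F K v x = 0 :=
  mem_stringSpace.1 (Subtype.property x) hv

theorem exists_coord_eq (F : G.Framing) (hv : v.1 ∈ p.support) (k : K) : ∃ x, p.coord F K v x = k :=
  ⟨⟨k, mem_stringSpace_of_mem hv k⟩, rfl⟩

theorem coord_act (a : Arrow F u v) (x : (p.stringRep F K).space u) :
    p.coord F K v ((p.stringRep F K).act a x) =
      if a.edge ∈ p.edges then p.coord F K u x else 0 := by
  obtain ⟨e, hs, ht, rfl, rfl⟩ := a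
  calc _ = (if e ∈ p.edges then 1 else 0 : K) • p.coord F K _ x := rfl
    _ = _ := by rw [ite_smul, one_smul, zero_smul]

theorem exists_arrow (p : G.InnerPath) (F : G.Framing) {e : G.E} (he : e ∈ p.edges) :
    ∃ (u v : G.InnerV) (a : Arrow F u v), a.edge = e :=
  ⟨_, _, ⟨e, p.isInner_src he, p.isInner_tgt he, rfl, rfl⟩, rfl⟩

theorem mem_vertexSupport_stringRep : v ∈ (p.stringRep F K).vertexSupport ↔ v.1 ∈ p.support := by
  constructor
  · rintro ⟨x, hx⟩
    by_contra hv
    exact hx ((map_eq_zero_iff _ coord_injective).1 (coord_eq_zero hv x))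
  · intro hv
    obtain ⟨x, hx⟩ := exists_coord_eq F hv (1 : K)
    exact ⟨x, fun h => by simp [h] at hx⟩

theorem mem_edgeSupport_stringRep {e : G.E} :
    e ∈ (p.stringRep F K).edgeSupport ↔ e ∈ p.edges := by
  constructor
  · rintro ⟨u, v, a, rfl, ha⟩
    by_contra he
    refine ha (LinearMap.ext fun x => coord_injective ?_)
    rw [coord_act, if_neg he, LinearMap.zero_apply, map_zero]
  · intro he
    obtain ⟨u, v, a, rfl⟩ := p.exists_arrow F he
    obtain ⟨x, hx⟩ := exists_coord_eq F (a.ends_mem_support he).1 (1 : K)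
    have hax : p.coord F K v ((p.stringRep F K).act a x) = 1 := by
      rw [coord_act, if_pos he, hx]
    exact ⟨u, v, a, rfl, fun h => by simp [h] at hax⟩

theorem iff_start_of_mem_support {P : G.InnerV → Prop}
    (hP : ∀ {u v} (a : Arrow F u v), a.edge ∈ p.edges → (P u ↔ P v)) (hv : v.1 ∈ p.support) :
    P v ↔ P p.start := by
  refine p.isPath.forall_mem_support (P := fun v => ∀ hv : G.IsInner v, P ⟨v, hv⟩ ↔ P p.start)
    (fun _ => Iff.rfl) (fun e he hs ht => ?_) v.1 hv v.2
  rw [← hs (p.isInner_src he)]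
  rcases weight_eq_one_or_two F e with hw | hw
  · obtain ⟨a, ha⟩ := exists_arrow_of_weight_eq_one (u := ⟨_, p.isInner_src he⟩)
        (v := ⟨G.tgt e, ht⟩) hw rfl rfl
    exact (hP a (by rwa [ha])).symm
  · obtain ⟨a, ha⟩ := exists_arrow_of_weight_eq_two (u := ⟨G.tgt e, ht⟩)
        (v := ⟨_, p.isInner_src he⟩) hw rfl rfl
    exact hP a (by rwa [ha])

theorem exists_forall_app_stringRep_eq_smul (φ : RepHom (p.stringRep F K) (p.stringRep F K)) :
    ∃ c : K, ∀ v x, φ.app v x = c • x := by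
  obtain ⟨y, hy⟩ := exists_coord_eq F p.start_mem_support (1 : K)
  let c := p.coord F K p.start (φ.app p.start y)
  have hstart (x : (p.stringRep F K).space p.start) : φ.app p.start x = c • x := by
    have hx : x = p.coord F K p.start x • y := coord_injective (by simp [hy])
    apply coord_injective
    conv_lhs => rw [hx, map_smul, map_smul]
    rw [map_smul, smul_eq_mul, smul_eq_mul, mul_comm]
  refine ⟨c, fun v => ?_⟩
  by_cases hv : v.1 ∈ p.support
  · refine (iff_start_of_mem_support (F := F) (P := fun v => ∀ x, φ.app v x = c • x)
      (fun {u v} a ha => ⟨fun h x => ?_, fun h x => ?_⟩) hv).2 hstart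
    · obtain ⟨x', hx'⟩ := exists_coord_eq F (a.ends_mem_support ha).1 (p.coord F K v x)
      obtain rfl : (p.stringRep F K).act a x' = x :=
        coord_injective (by rw [coord_act, if_pos ha, hx'])
      rw [φ.app_act, h, map_smul]
    · apply coord_injective
      have hcoord (z) := (coord_act (K := K) a z).trans (if_pos ha)
      rw [← hcoord, ← φ.app_act, h, map_smul, hcoord, map_smul]
  · exact fun x => coord_injective (by rw [coord_eq_zero hv, coord_eq_zero hv])

theorem indecomposable_stringRep : Indecomposable (p.stringRep F K) := by
  obtain ⟨y, hy⟩ := exists_coord_eq F p.start_mem_support (1 : K)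
  have hy0 : y ≠ 0 := fun h => by simp [h] at hy
  refine ⟨⟨p.start, y, hy0⟩, fun φ hφ => ?_⟩
  obtain ⟨c, hc⟩ := exists_forall_app_stringRep_eq_smul φ
  have hidem : IsIdempotentElem c := by
    have hcy := hφ p.start y
    rw [hc, hc, smul_smul] at hcy
    exact smul_left_injective K hy0 hcy
  rcases IsIdempotentElem.iff_eq_zero_or_one.1 hidem with rfl | rfl
  · exact .inl fun v x => (hc v x).trans (zero_smul K x)
  · exact .inr fun v x => (hc v x).trans (one_smul K x)

theorem eq_of_support_stringRep_eq
    (hvertex : (p.stringRep F K).vertexSupport = (q.stringRep F K).vertexSupport)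
    (hedge : (p.stringRep F K).edgeSupport = (q.stringRep F K).edgeSupport) : p = q := by
  have hv : ∀ v : G.InnerV, v.1 ∈ p.support ↔ v.1 ∈ q.support := fun v => by
    rw [← mem_vertexSupport_stringRep (F := F) (K := K), hvertex, mem_vertexSupport_stringRep]
  have he : ∀ e, e ∈ p.edges ↔ e ∈ q.edges := fun e => by
    rw [← mem_edgeSupport_stringRep (F := F) (K := K), hedge, mem_edgeSupport_stringRep]
  have hsupport : p.support = q.support :=
    p.isPath.pairwise_precedes.eq_of_mem_iff q.isPath.pairwise_precedes fun v =>
      ⟨fun h => (hv ⟨v, p.isInner_of_mem_support h⟩).1 h,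
        fun h => (hv ⟨v, q.isInner_of_mem_support h⟩).2 h⟩
  have hsorted (p : G.InnerPath) : p.edges.Pairwise (G.tgt ⁻¹'o G.Precedes) :=
    (List.pairwise_map (f := G.tgt)).1 p.isPath.pairwise_precedes.of_cons
  exact ext_edges (Subtype.ext (List.head_eq_of_cons_eq hsupport))
    ((hsorted p).eq_of_mem_iff (hsorted q) he)

variable {M : G.Rep F K}

theorem exists_repHom_from_stringRep (x : ∀ u, M.space u)
    (hx : ∀ {u v} (a : Arrow F u v), M.act a (x u) = if a.edge ∈ p.edges then x v else 0) :
    ∃ φ : RepHom (p.stringRep F K) M, ∀ u z, φ.app u z = p.coord F K u z • x u := by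
  refine ⟨.ofAct (fun u => (p.coord F K u).smulRight (x u)) fun {u v} a z => ?_, fun u z => rfl⟩
  rw [LinearMap.smulRight_apply, LinearMap.smulRight_apply, map_smul, hx, coord_act, ite_smul,
    smul_ite, zero_smul, smul_zero]

theorem exists_repHom_to_stringRep (ξ : ∀ u, Module.Dual K (M.space u))
    (hξ : ∀ {u v} (a : Arrow F u v) m, ξ v (M.act a m) = if a.edge ∈ p.edges then ξ u m else 0)
    (hzero : ∀ u : G.InnerV, u.1 ∉ p.support → ξ u = 0) :
    ∃ φ : RepHom M (p.stringRep F K), ∀ u m, p.coord F K u (φ.app u m) = ξ u m := by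
  let φ (u : G.InnerV) : M.space u →ₗ[K] (p.stringRep F K).space u :=
    (ξ u).codRestrict (p.stringSpace K u) fun m => mem_stringSpace.2 fun hu => by simp [hzero u hu]
  have hφ (u m) : p.coord F K u (φ u m) = ξ u m := rfl
  exact ⟨.ofAct φ fun a m => coord_injective (by rw [hφ, hξ, coord_act, hφ]), hφ⟩

end InnerPath

end StringModules

section Splittings

variable {K : Type} [Field K] {p : G.InnerPath} {u v w : G.InnerV}

theorem exists_dual_comp_eq {A B : Type*} [AddCommGroup A] [Module K A] [AddCommGroup B]
    [Module K B] (f : A →ₗ[K] B) {W : Submodule K B} {ξ : Module.Dual K A}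
    (hξ : W.comap f ≤ LinearMap.ker ξ) :
    ∃ η : Module.Dual K B, η ∘ₗ f = ξ ∧ W ≤ LinearMap.ker η := by
  have hrange : ξ ∈ LinearMap.range (W.mkQ ∘ₗ f).dualMap := by
    rw [LinearMap.range_dualMap_eq_dualAnnihilator_ker, Submodule.mem_dualAnnihilator]
    exact fun a ha => hξ (by simpa using ha)
  obtain ⟨η, hη⟩ := hrange
  exact ⟨η ∘ₗ W.mkQ, hη, fun y hy => by simp [(Submodule.Quotient.mk_eq_zero W).2 hy]⟩

variable {M : G.Rep F K} {x x' : ∀ u, M.space u} {ξ ξ' : ∀ u, Module.Dual K (M.space u)}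

/-- Vectors `x` and functionals `ξ` along `p` such that `x` spans a copy of the string module of `p`
onto which `ξ` projects, up to conditions at the start of `p`. -/
structure IsSplitting (M : G.Rep F K) (p : G.InnerPath) (x : ∀ u, M.space u)
    (ξ : ∀ u, Module.Dual K (M.space u)) : Prop where
  act : ∀ {u v} (a : Arrow F u v), a.edge ∈ p.edges → M.act a (x u) = x v
  dual_act : ∀ {u v} (a : Arrow F u v), a.edge ∈ p.edges → ξ v ∘ₗ M.act a = ξ u
  act_finish : ∀ {v} (a : Arrow F p.finish v), G.weight F a.edge = 1 → M.act a (x p.finish) = 0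
  dual_act_finish : ∀ {u} (a : Arrow F u p.finish), G.weight F a.edge = 2 →
    ξ p.finish ∘ₗ M.act a = 0
  vector_eq_zero : ∀ u : G.InnerV, u.1 ∉ p.support → x u = 0
  dual_eq_zero : ∀ u : G.InnerV, u.1 ∉ p.support → ξ u = 0
  dual_finish : ξ p.finish (x p.finish) = 1

theorem exists_isSplitting_nil {y : M.space v} {η : Module.Dual K (M.space v)} (hη : η y = 1)
    (hy : ∀ {w} (a : Arrow F v w), G.weight F a.edge = 1 → M.act a y = 0)
    (hact : ∀ {u} (a : Arrow F u v), G.weight F a.edge = 2 → η ∘ₗ M.act a = 0) :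
    ∃ x ξ, IsSplitting M (.nil v) x ξ ∧ x v = y ∧ ξ v = η := by
  classical
  have hne {u : G.InnerV} (hu : u.1 ∉ (InnerPath.nil v).support) : u ≠ v := fun h =>
    hu (h ▸ InnerPath.start_mem_support _)
  have hx : Function.update (0 : ∀ u, M.space u) v y v = y := Function.update_self ..
  have hξ : Function.update (0 : ∀ u, Module.Dual K (M.space u)) v η v = η :=
    Function.update_self ..
  refine ⟨_, _, ⟨fun _ h => ?_, fun _ h => ?_, fun a ha => ?_, fun a ha => ?_,
    fun u hu => Function.update_of_ne (hne hu) .., fun u hu => Function.update_of_ne (hne hu) ..,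
    ?_⟩, hx, hξ⟩
  · exact absurd h List.not_mem_nil
  · exact absurd h List.not_mem_nil
  · exact (congrArg (M.act a) hx).trans (hy a ha)
  · exact (congrArg (· ∘ₗ M.act a) hξ).trans (hact a ha)
  · exact (congrArg₂ (· ·) hξ hx).trans hη

theorem IsSplitting.cons {e : G.E} {hs : G.src e = v.1} {ht : G.tgt e = p.start.1}
    (h : IsSplitting M p x ξ) (hx : ∀ u ≠ v, x' u = x u) (hξ : ∀ u ≠ v, ξ' u = ξ u)
    (a : Arrow F u w) (ha : a.edge = e)
    (hact : M.act a (x' u) = x' w) (hdual : ξ' w ∘ₗ M.act a = ξ' u) :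
    IsSplitting M (p.cons e hs ht) x' ξ' := by
  have hne {u : G.InnerV} (hu : u.1 ∈ p.support) : u ≠ v := by
    rintro rfl
    exact InnerPath.notMem_support_of_src_eq hs ht hu
  have hxfin : x' p.finish = x p.finish := hx _ (hne p.isPath.finish_mem_support)
  have hξfin : ξ' p.finish = ξ p.finish := hξ _ (hne p.isPath.finish_mem_support)
  refine ⟨fun b hb => ?_, fun b hb => ?_, fun b hb => ?_, fun b hb => ?_, fun u hu => ?_,
    fun u hu => ?_, ?_⟩
  · rcases List.mem_cons.1 hb with hb | hb
    · exact Arrow.forall_of_edge_eq (P := fun {u w} b => M.act b (x' u) = x' w) hact b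
        (hb.trans ha.symm)
    · rw [hx _ (hne (b.ends_mem_support hb).1), hx _ (hne (b.ends_mem_support hb).2), h.act b hb]
  · rcases List.mem_cons.1 hb with hb | hb
    · exact Arrow.forall_of_edge_eq (P := fun {u w} b => ξ' w ∘ₗ M.act b = ξ' u) hdual b
        (hb.trans ha.symm)
    · rw [hξ _ (hne (b.ends_mem_support hb).1), hξ _ (hne (b.ends_mem_support hb).2),
        h.dual_act b hb]
  · exact (congrArg (M.act b) hxfin).trans (h.act_finish b hb)
  · exact (congrArg (· ∘ₗ M.act b) hξfin).trans (h.dual_act_finish b hb)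
  · rw [InnerPath.mem_support_cons, not_or] at hu
    rw [hx u (mt (congrArg _) hu.1), h.vector_eq_zero u hu.2]
  · rw [InnerPath.mem_support_cons, not_or] at hu
    rw [hξ u (mt (congrArg _) hu.1), h.dual_eq_zero u hu.2]
  · exact (congrArg₂ (· ·) hξfin hxfin).trans h.dual_finish

/-- Existence of a splitting along some inner path starting at `v`, with vector at `v` in `W` and
functional at `v` vanishing on `W'`. -/
def HasSplitting (M : G.Rep F K) (W' W : Submodule K (M.space v)) : Prop :=
  ∃ p x ξ, IsSplitting M p x ξ ∧ p.start = v ∧ x v ∈ W ∧ W' ≤ LinearMap.ker (ξ v)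

variable {W' W : Submodule K (M.space v)}

theorem HasSplitting.of_comap (a : Arrow F w v) (ha : G.weight F a.edge = 2)
    (h : HasSplitting M (W'.comap (M.act a)) (W.comap (M.act a))) : HasSplitting M W' W := by
  classical
  obtain ⟨p, x, ξ, h, rfl, hx, hξ⟩ := h
  obtain ⟨η, hη, hηW⟩ := exists_dual_comp_eq (M.act a) hξ
  obtain ⟨ht, hs⟩ := a.ends_of_weight_eq_two ha
  have hne : p.start ≠ v := by
    rintro rfl
    exact InnerPath.notMem_support_of_src_eq hs ht p.start_mem_support
  refine ⟨_, Function.update x v (M.act a (x p.start)), Function.update ξ v η,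
    h.cons (hs := hs) (ht := ht) (fun u hu => Function.update_of_ne hu ..)
      (fun u hu => Function.update_of_ne hu ..) a rfl ?_ ?_, rfl, ?_, ?_⟩
  · rw [Function.update_of_ne hne, Function.update_self]
  · rw [Function.update_of_ne hne, Function.update_self, hη]
  · rwa [Function.update_self]
  · rwa [Function.update_self]

theorem HasSplitting.of_map (a : Arrow F v w) (ha : G.weight F a.edge = 1)
    (h : HasSplitting M (W'.map (M.act a)) (W.map (M.act a))) : HasSplitting M W' W := by
  classical
  obtain ⟨p, x, ξ, h, rfl, ⟨y, hyW, hy⟩, hξ⟩ := h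
  obtain ⟨hs, ht⟩ := a.ends_of_weight_eq_one ha
  have hne : p.start ≠ v := by
    rintro rfl
    exact InnerPath.notMem_support_of_src_eq hs ht p.start_mem_support
  refine ⟨_, Function.update x v y, Function.update ξ v (ξ p.start ∘ₗ M.act a),
    h.cons (hs := hs) (ht := ht) (fun u hu => Function.update_of_ne hu ..)
      (fun u hu => Function.update_of_ne hu ..) a rfl ?_ ?_, rfl, ?_, ?_⟩
  · rw [Function.update_of_ne hne, Function.update_self, hy]
  · rw [Function.update_of_ne hne, Function.update_self]
  · rwa [Function.update_self]
  · rw [Function.update_self]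
    exact fun z hz => hξ ⟨z, hz, rfl⟩

theorem HasSplitting.of_act_eq_zero (hF : F.Balanced) (hW : W' ≤ W) {y : M.space v} (hyW : y ∈ W)
    (hyW' : y ∉ W') (hy : ∀ {w} (a : Arrow F v w), G.weight F a.edge = 1 → M.act a y = 0)
    (hcomap : ∀ {u} (a : Arrow F u v), G.weight F a.edge = 2 →
      W.comap (M.act a) ≤ W'.comap (M.act a)) : HasSplitting M W' W := by
  obtain ⟨D, hD, hDW⟩ : ∃ D : Submodule K (M.space v), (∀ {u} (a : Arrow F u v),
      G.weight F a.edge = 2 → LinearMap.range (M.act a) ≤ D) ∧ D ⊓ W ≤ W' := by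
    by_cases harrow : ∃ (u : G.InnerV) (a : Arrow F u v), G.weight F a.edge = 2
    · obtain ⟨u, a, ha⟩ := harrow
      refine ⟨LinearMap.range (M.act a), fun {u'} b hb => ?_, ?_⟩
      · exact hF.forall_arrow_to (P := fun b => LinearMap.range (M.act b) ≤ _) le_rfl b
          (ha.trans hb.symm)
      · rintro _ ⟨⟨z, rfl⟩, hz⟩
        exact hcomap a ha hz
    · push Not at harrow
      exact ⟨⊥, fun a ha => absurd ha (harrow _ a), by simp⟩
  have hyD : y ∉ W' ⊔ D := fun hmem => by
    obtain ⟨z, hz, d, hd, rfl⟩ := Submodule.mem_sup.1 hmem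
    exact hyW' (add_mem hz (hDW ⟨hd, (W.add_mem_iff_right (hW hz)).1 hyW⟩))
  obtain ⟨η, hη, hηy⟩ :=
    LinearMap.exists_extend_of_notMem (0 : ↥(W' ⊔ D) →ₗ[K] K) hyD 1
  have hηzero (z) (hz : z ∈ W' ⊔ D) : η z = 0 := LinearMap.congr_fun hη ⟨z, hz⟩
  obtain ⟨x, ξ, h, hx, hξ⟩ := exists_isSplitting_nil hηy hy fun a ha =>
    LinearMap.ext fun m => hηzero _ (le_sup_right (a := W') (hD a ha ⟨m, rfl⟩))
  exact ⟨_, x, ξ, h, rfl, hx ▸ hyW, hξ ▸ fun z hz => hηzero z (le_sup_left (b := D) hz)⟩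

theorem Framing.Balanced.hasSplitting (hF : F.Balanced) (hW : W' ≤ W) (hne : ¬ W ≤ W') :
    HasSplitting M W' W := by
  refine (InvImage.wf (fun v : G.InnerV => v.1) G.wellFounded_swap_precedes).induction
    (C := fun v => ∀ W' W : Submodule K (M.space v), W' ≤ W → ¬ W ≤ W' → HasSplitting M W' W)
    v (fun v ih W' W hW hne => ?_) W' W hW hne
  by_cases hcomap : ∃ (w : G.InnerV) (a : Arrow F w v), G.weight F a.edge = 2 ∧
      ¬ W.comap (M.act a) ≤ W'.comap (M.act a)
  · obtain ⟨w, a, ha, hlt⟩ := hcomap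
    obtain ⟨ht, hs⟩ := a.ends_of_weight_eq_two ha
    have hvw : G.Precedes v.1 w.1 := hs ▸ ht ▸ precedes_src_tgt a.edge
    exact .of_comap a ha (ih w hvw _ _ (Submodule.comap_mono hW) hlt)
  push Not at hcomap
  by_cases hkill : ∃ y ∈ W, y ∉ W' ∧
      ∀ {w : G.InnerV} (a : Arrow F v w), G.weight F a.edge = 1 → M.act a y = 0
  · obtain ⟨y, hyW, hyW', hy⟩ := hkill
    exact .of_act_eq_zero hF hW hyW hyW' hy fun a => hcomap _ a
  push Not at hkill
  obtain ⟨y, hyW, hyW'⟩ := SetLike.not_le_iff_exists.1 hne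
  obtain ⟨w, a, ha, -⟩ := hkill y hyW hyW'
  obtain ⟨hs, ht⟩ := a.ends_of_weight_eq_one ha
  have hvw : G.Precedes v.1 w.1 := hs ▸ ht ▸ precedes_src_tgt a.edge
  refine .of_map a ha (ih w hvw _ _ (Submodule.map_mono hW) fun hle => ?_)
  obtain ⟨z, hz, hzy⟩ := hle ⟨y, hyW, rfl⟩
  obtain ⟨w', b, hb, hact⟩ := hkill (y - z) (sub_mem hyW (hW hz)) fun hyz =>
    hyW' ((W'.sub_mem_iff_left hz).1 hyz)
  refine hact (hF.forall_arrow_from (P := fun b => M.act b (y - z) = 0) ?_ b (ha.trans hb.symm))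
  rw [map_sub, hzy, sub_self]

end Splittings

section Classification

variable {K : Type} [Field K] {p : G.InnerPath} {u v : G.InnerV}

theorem Arrow.exists_arrow_to_of_notMem (hF : F.Balanced) (a : Arrow F u v)
    (ha : a.edge ∉ p.edges) (hu : u.1 ∈ p.support) :
    (∃ w, ∃ b : Arrow F w u, b.edge ∈ p.edges ∧ G.weight F b.edge ≠ G.weight F a.edge) ∨
      (u = p.finish ∧ G.weight F a.edge = 1) ∨ G.Precedes v.1 p.start.1 := by
  rcases a.ends with ⟨wa, hs, -⟩ | ⟨wa, ht, hs⟩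
  · by_cases hfin : u.1 = p.finish.1
    · exact .inr (.inl ⟨InnerV.ext hfin, wa⟩)
    -- The edges of `a` and `e` leave `u` with different weights, so the arrow of `e` ends at `u`.
    obtain ⟨e, he, hse⟩ := p.exists_edge_src_eq_of_ne_finish hu hfin
    have hw : G.weight F e = 2 := weight_ne_one_iff.1 fun hw =>
      ha (hF.eq_of_src_eq hs hse (wa.trans hw.symm) ▸ he)
    obtain ⟨b, hb⟩ := exists_arrow_of_weight_eq_two (u := ⟨_, p.isInner_tgt he⟩) hw rfl hse
    exact .inl ⟨_, b, by rwa [hb], by simp [hb, hw, wa]⟩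
  · by_cases hstart : u.1 = p.start.1
    · exact .inr (.inr (hstart ▸ ht ▸ hs ▸ precedes_src_tgt a.edge))
    obtain ⟨e, he, hte⟩ := p.exists_edge_tgt_eq_of_ne_start hu hstart
    have hw : G.weight F e = 1 := weight_ne_two_iff.1 fun hw =>
      ha (hF.eq_of_tgt_eq ht hte (wa.trans hw.symm) ▸ he)
    obtain ⟨b, hb⟩ := exists_arrow_of_weight_eq_one (u := ⟨_, p.isInner_src he⟩) hw rfl hte
    exact .inl ⟨_, b, by rwa [hb], by simp [hb, hw, wa]⟩

theorem Arrow.exists_arrow_from_of_notMem (hF : F.Balanced) (a : Arrow F u v)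
    (ha : a.edge ∉ p.edges) (hv : v.1 ∈ p.support) :
    (∃ w, ∃ b : Arrow F v w, b.edge ∈ p.edges ∧ G.weight F a.edge ≠ G.weight F b.edge) ∨
      (v = p.finish ∧ G.weight F a.edge = 2) ∨ G.Precedes u.1 p.start.1 := by
  rcases a.ends with ⟨wa, hs, ht⟩ | ⟨wa, -, hs⟩
  · by_cases hstart : v.1 = p.start.1
    · exact .inr (.inr (hstart ▸ ht ▸ hs ▸ precedes_src_tgt a.edge))
    obtain ⟨e, he, hte⟩ := p.exists_edge_tgt_eq_of_ne_start hv hstart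
    have hw : G.weight F e = 2 := weight_ne_one_iff.1 fun hw =>
      ha (hF.eq_of_tgt_eq ht hte (wa.trans hw.symm) ▸ he)
    obtain ⟨b, hb⟩ := exists_arrow_of_weight_eq_two (v := ⟨_, p.isInner_src he⟩) hw hte rfl
    exact .inl ⟨_, b, by rwa [hb], by simp [hb, hw, wa]⟩
  · by_cases hfin : v.1 = p.finish.1
    · exact .inr (.inl ⟨InnerV.ext hfin, wa⟩)
    obtain ⟨e, he, hse⟩ := p.exists_edge_src_eq_of_ne_finish hv hfin
    have hw : G.weight F e = 1 := weight_ne_two_iff.1 fun hw =>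
      ha (hF.eq_of_src_eq hs hse (wa.trans hw.symm) ▸ he)
    obtain ⟨b, hb⟩ := exists_arrow_of_weight_eq_one (v := ⟨_, p.isInner_tgt he⟩) hw hse rfl
    exact .inl ⟨_, b, by rwa [hb], by simp [hb, hw, wa]⟩

variable {M : G.Rep F K} {x : ∀ u, M.space u} {ξ : ∀ u, Module.Dual K (M.space u)}

namespace IsSplitting

theorem act_eq_zero (h : IsSplitting M p x ξ) (hF : F.Balanced)
    (hM : ∀ u : G.InnerV, G.Precedes u.1 p.start.1 → ∀ m : M.space u, m = 0) (a : Arrow F u v)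
    (ha : a.edge ∉ p.edges) : M.act a (x u) = 0 := by
  by_cases hu : u.1 ∈ p.support
  · rcases a.exists_arrow_to_of_notMem hF ha hu with ⟨w, b, hb, hne⟩ | ⟨rfl, wa⟩ | hv
    · rw [← h.act b hb, M.act_act_of_weight_ne b a hne]
    · exact h.act_finish a wa
    · exact hM v hv _
  · rw [h.vector_eq_zero u hu, map_zero]

theorem dual_act_eq_zero (h : IsSplitting M p x ξ) (hF : F.Balanced)
    (hM : ∀ u : G.InnerV, G.Precedes u.1 p.start.1 → ∀ m : M.space u, m = 0) (a : Arrow F u v)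
    (ha : a.edge ∉ p.edges) (m : M.space u) : ξ v (M.act a m) = 0 := by
  by_cases hv : v.1 ∈ p.support
  · rcases a.exists_arrow_from_of_notMem hF ha hv with ⟨w, b, hb, hne⟩ | ⟨rfl, wa⟩ | hu
    · rw [← h.dual_act b hb, LinearMap.comp_apply, M.act_act_of_weight_ne a b hne, map_zero]
    · exact LinearMap.congr_fun (h.dual_act_finish a wa) m
    · rw [hM u hu m, map_zero, map_zero]
  · rw [h.dual_eq_zero v hv, LinearMap.zero_apply]

theorem dual_vector_eq_one (h : IsSplitting M p x ξ) (hv : v.1 ∈ p.support) : ξ v (x v) = 1 := by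
  have hiff {v : G.InnerV} (hv : v.1 ∈ p.support) : ξ v (x v) = 1 ↔ ξ p.start (x p.start) = 1 :=
    InnerPath.iff_start_of_mem_support (F := F) (P := fun v => ξ v (x v) = 1)
      (fun a ha => by rw [← h.act a ha, ← h.dual_act a ha, LinearMap.comp_apply]) hv
  exact (hiff hv).2 ((hiff p.isPath.finish_mem_support).1 h.dual_finish)

theorem repIso (h : IsSplitting M p x ξ) (hF : F.Balanced)
    (hM : ∀ u : G.InnerV, G.Precedes u.1 p.start.1 → ∀ m : M.space u, m = 0)
    (hindec : Indecomposable M) : RepIso M (p.stringRep F K) := by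
  obtain ⟨i, hi⟩ := InnerPath.exists_repHom_from_stringRep (p := p) x fun {u v} a => by
    split_ifs with ha
    exacts [h.act a ha, h.act_eq_zero hF hM a ha]
  obtain ⟨r, hr⟩ := InnerPath.exists_repHom_to_stringRep (p := p) ξ (fun {u v} a m => by
    split_ifs with ha
    exacts [LinearMap.congr_fun (h.dual_act a ha) m, h.dual_act_eq_zero hF hM a ha m])
    h.dual_eq_zero
  refine repIso_of_retract hindec i r (fun v z => InnerPath.coord_injective ?_)
    InnerPath.indecomposable_stringRep.1
  rw [hr, hi, map_smul, smul_eq_mul]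
  by_cases hv : v.1 ∈ p.support
  · rw [h.dual_vector_eq_one hv, mul_one]
  · rw [InnerPath.coord_eq_zero hv, zero_mul]

end IsSplitting

theorem Indecomposable.exists_repIso_stringRep (hM : Indecomposable M) (hF : F.Balanced) :
    ∃ p : G.InnerPath, RepIso M (p.stringRep F K) := by
  obtain ⟨v, ⟨m, hm⟩, hmin⟩ :=
    (InvImage.wf (fun v : G.InnerV => v.1) G.wellFounded_precedes).has_min M.vertexSupport hM.1
  have hne : ¬ (⊤ : Submodule K (M.space v)) ≤ ⊥ := fun h => hm (h (Submodule.mem_top (x := m)))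
  obtain ⟨p, x, ξ, h, rfl, -⟩ := hF.hasSplitting bot_le hne
  exact ⟨p, h.repIso hF (fun u hu m => by_contra fun hm => hmin u ⟨m, hm⟩ hu) hM⟩

theorem Framing.Balanced.nonempty_innerPath_equiv (hF : F.Balanced) (K : Type) [Field K] :
    Nonempty (G.InnerPath ≃
      Quot fun M N : {M : G.Rep F K // Indecomposable M} => RepIso M.1 N.1) := by
  refine ⟨.ofBijective (fun p => Quot.mk _ ⟨p.stringRep F K, InnerPath.indecomposable_stringRep⟩)
    ⟨fun p q hpq => InnerPath.eq_of_support_stringRep_eq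
      (congrArg (Quot.lift (fun M => M.1.vertexSupport) fun _ _ h => h.vertexSupport_eq) hpq)
      (congrArg (Quot.lift (fun M => M.1.edgeSupport) fun _ _ h => h.edgeSupport_eq) hpq),
    Quot.ind fun M => ?_⟩⟩
  obtain ⟨p, hp⟩ := M.2.exists_repIso_stringRep hF
  exact ⟨p, Eq.symm (Quot.sound hp)⟩

end Classification

end DAG

theorem routes_modules_bijection_general (G : DAG) (F : G.Framing)
    (hfull : G.Full) (hample : G.Ample F)
    (K : Type) [Field K] :
    Nonempty ({R : G.Route // ¬ G.Exceptional F R} ≃ G.TLambda F K) := by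
  obtain ⟨cores⟩ := hfull.nonempty_route_equiv hample
  obtain ⟨strings⟩ := (hfull.balanced hample).nonempty_innerPath_equiv K
  exact ⟨cores.trans (strings.sumCongr (.refl _))⟩

/-- For a full DAG `G` with a fixed ample framing, there is a
bijection between the non-exceptional routes of `G` and the set `T(Λ(G))` of
isomorphism classes of indecomposable modules over the associated gentle
algebra `Λ(G)` together with the shifted projectives `P_i[1]`, one for each
inner vertex `i`. -/
theorem routes_modules_bijection (G : DAG) (F : G.Framing)
    (hfull : G.Full) (hample : G.Ample F)
    (K : Type) [Field K] [IsAlgClosed K] :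
    Nonempty ({R : G.Route // ¬ G.Exceptional F R} ≃ G.TLambda F K) :=
  routes_modules_bijection_general G F hfull hample K
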